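/- There exists an absolute constant C > 0 such that for every q ≥ 1, every p ∈ [2, ∞], every dimension d ∈ ℕ and every f ∈ ℓ^p(ℤ^d), one has ‖ sup_{t ∈ 𝔻, t ≤ d^{1/q}} |𝓜_t^q f| ‖_{ℓ^p(ℤ^d)} ≤ C ‖f‖_{ℓ^p(ℤ^d)}. -/

import Mathlib

open scoped ENNReal NNReal

open Classical in
noncomputable def latticeBall (q : ℝ) (d : ℕ) (t : ℝ) : Finset (Fin d → ℤ) :=
  (Finset.Icc (fun _ => -(⌈t⌉₊ : ℤ)) (fun _ => (⌈t⌉₊ : ℤ))).filter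
    (fun x => ∑ i, |(x i : ℝ)| ^ q ≤ t ^ q)

noncomputable def avgOp (q : ℝ) (d : ℕ) (t : ℝ) (f : (Fin d → ℤ) → ℂ) (x : Fin d → ℤ) : ℂ :=
  ((latticeBall q d t).card : ℂ)⁻¹ * ∑ y ∈ latticeBall q d t, f (x - y)

noncomputable def lpNorm (p : ℝ≥0∞) {d : ℕ} (g : (Fin d → ℤ) → ℝ≥0∞) : ℝ≥0∞ :=
  if p = ∞ then ⨆ x, g x else (∑' x, g x ^ p.toReal) ^ (1 / p.toReal)

/-!
Write `N = t ^ q`, so that `N ≤ d`. The Fourier multiplier of the average over the ball is compared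
with functions of the single parameter `κ = meanCos θ`, the multiplier of the simple random walk
`K`: a typical point of the ball has a positive proportion of its energy in coordinates `±1`, hence
the multiplier is close to `1` if `N * (1 - κ)` is small, small if `N * (1 - |κ|)` is large, and,
by reflection in `(π, …, π)`, close to a constant if `N * (1 + κ)` is small, with constants
independent of `d` and `q`. The Cesàro means of the powers of `K`, and of `-K` for the last regime,
over about `N` steps behave in the same way, so by Plancherel the square function of the
differences over dyadic `t` is bounded on `ℓ²`. The maximal function of the Cesàro means themselves
is bounded on `ℓ²` because `K` is a symmetric Markov operator, and those of `-K` are dominated by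
those of `K`. For `p > 2`, apply the `ℓ²` inequality to `|f| ^ (p / 2)` and use Jensen's
inequality.
-/

namespace LatticeBall

open Finset
open scoped AddMonoidAlgebra BigOperators

section EnergyBall

variable {ι : Type*} [Fintype ι]

/-- The `q`-energy `∑ |x i| ^ q` of an integer vector; its sublevel sets are the lattice points of
`ℓ^q` balls. -/
noncomputable def energy (q : ℝ) (x : ι → ℤ) : ℝ := ∑ i, |(x i : ℝ)| ^ q

/-- The number of coordinates equal to `±1`. The other nonzero coordinates will turn out to
contribute little to the energy of a typical point. -/
def unitCount (x : ι → ℤ) : ℕ := #{i | |x i| = 1}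

/-- The lattice points of `q`-energy at most `E` that vanish on `S`. The cut-off to a box only
serves to produce a finite set, see `mem_energyBall`. -/
noncomputable def energyBall [DecidableEq ι] (q : ℝ) (S : Finset ι) (E : ℝ) : Finset (ι → ℤ) :=
  {x ∈ Icc (fun _ ↦ -(⌈E⌉₊ : ℤ)) (fun _ ↦ (⌈E⌉₊ : ℤ)) | (∀ i ∈ S, x i = 0) ∧ energy q x ≤ E}

variable {q : ℝ}

lemma abs_le_abs_rpow (hq : 1 ≤ q) (k : ℤ) : |(k : ℝ)| ≤ |(k : ℝ)| ^ q := by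
  rcases eq_or_ne k 0 with rfl | hk
  · simp [Real.zero_rpow (by linarith : q ≠ 0)]
  · have h1 : (1 : ℝ) ≤ |(k : ℝ)| := by exact_mod_cast Int.one_le_abs hk
    simpa using Real.rpow_le_rpow_of_exponent_le h1 hq

lemma abs_rpow_le_energy (x : ι → ℤ) (i : ι) : |(x i : ℝ)| ^ q ≤ energy q x :=
  single_le_sum (f := fun i ↦ |(x i : ℝ)| ^ q) (fun _ _ ↦ by positivity) (mem_univ i)

lemma card_ne_zero_le_energy (hq : 1 ≤ q) (x : ι → ℤ) : (#{i | x i ≠ 0} : ℝ) ≤ energy q x := by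
  rw [card_filter, Nat.cast_sum]
  refine sum_le_sum fun i _ ↦ ?_
  split_ifs with h
  · have h1 : (1 : ℝ) ≤ |(x i : ℝ)| := by exact_mod_cast Int.one_le_abs h
    exact_mod_cast h1.trans (abs_le_abs_rpow hq (x i))
  · rw [Nat.cast_zero]
    positivity

lemma unitCount_le_energy (hq : 1 ≤ q) (x : ι → ℤ) : (unitCount x : ℝ) ≤ energy q x := by
  refine le_trans ?_ (card_ne_zero_le_energy hq x)
  refine Nat.cast_le.2 (card_le_card fun i ↦ ?_)
  simp only [mem_filter, mem_univ, true_and]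
  rintro h h0
  simp [h0] at h

lemma energy_eq_sum_add_unitCount (hq : 1 ≤ q) (x : ι → ℤ) :
    energy q x = (∑ i, if 2 ≤ |x i| then |(x i : ℝ)| ^ q else 0) + unitCount x := by
  rw [unitCount, card_filter, Nat.cast_sum, ← sum_add_distrib]
  refine sum_congr rfl fun i _ ↦ ?_
  have hcases : x i = 0 ∨ |x i| = 1 ∨ 2 ≤ |x i| := by
    rw [← abs_eq_zero]
    have := abs_nonneg (x i)
    omega
  rcases hcases with h | h | h
  · simp [h, Real.zero_rpow (by linarith : q ≠ 0)]
  · have h' : |(x i : ℝ)| = 1 := by exact_mod_cast h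
    simp [h, h']
  · simp [h, show |x i| ≠ 1 by omega]

variable [DecidableEq ι]

lemma sum_comp_update_add {M : Type*} [AddCommMonoid M] (g : ℤ → M) (x : ι → ℤ) (j : ι)
    (v : ℤ) :
    ∑ i, g (Function.update x j v i) + g (x j) = ∑ i, g (x i) + g v := by
  rw [← add_sum_erase _ _ (mem_univ j), ← add_sum_erase univ (fun i ↦ g (x i)) (mem_univ j),
    sum_congr rfl fun i hi ↦ by rw [Function.update_of_ne (ne_of_mem_erase hi)],
    Function.update_self]
  abel

lemma energy_update_zero (hq : 1 ≤ q) (x : ι → ℤ) (j : ι) :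
    energy q (Function.update x j 0) = energy q x - |(x j : ℝ)| ^ q := by
  have h := sum_comp_update_add (fun k ↦ |(k : ℝ)| ^ q) x j 0
  rw [Int.cast_zero, abs_zero, Real.zero_rpow (by linarith), add_zero] at h
  exact eq_sub_of_add_eq h

lemma energy_update_of_eq_zero (hq : 1 ≤ q) {x : ι → ℤ} {j : ι} (hx : x j = 0) {s : ℤ}
    (hs : |s| = 1) : energy q (Function.update x j s) = energy q x + 1 := by
  have hs' : |(s : ℝ)| = 1 := by exact_mod_cast hs
  have h := sum_comp_update_add (fun k ↦ |(k : ℝ)| ^ q) x j s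
  simpa [hx, hs', Real.zero_rpow (by linarith : q ≠ 0), energy] using h

lemma unitCount_update (x : ι → ℤ) (j : ι) (v : ℤ) :
    unitCount (Function.update x j v) + (if |x j| = 1 then 1 else 0)
      = unitCount x + (if |v| = 1 then 1 else 0) := by
  simpa only [unitCount, card_filter] using
    sum_comp_update_add (fun k ↦ if |k| = 1 then 1 else 0) x j v

omit [Fintype ι] in
lemma eq_of_update_eq_update {x y : ι → ℤ} {j : ι} {v : ℤ} (hj : x j = y j)
    (h : Function.update x j v = Function.update y j v) : x = y := by
  rw [← Function.update_eq_self j x, ← Function.update_idem v (x j) x, h, hj,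
    Function.update_idem, Function.update_eq_self]

lemma mem_energyBall (hq : 1 ≤ q) {S : Finset ι} {E : ℝ} {x : ι → ℤ} :
    x ∈ energyBall q S E ↔ (∀ i ∈ S, x i = 0) ∧ energy q x ≤ E := by
  refine ⟨fun h ↦ (mem_filter.1 h).2, fun h ↦ mem_filter.2 ⟨?_, h⟩⟩
  have hbound : ∀ i, |x i| ≤ (⌈E⌉₊ : ℤ) := fun i ↦ by
    have : |(x i : ℝ)| ≤ ⌈E⌉₊ :=
      ((abs_le_abs_rpow hq (x i)).trans (abs_rpow_le_energy x i)).trans (h.2.trans (Nat.le_ceil E))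
    exact_mod_cast this
  exact mem_Icc.2 ⟨fun i ↦ (abs_le.1 (hbound i)).1, fun i ↦ (abs_le.1 (hbound i)).2⟩

lemma energyBall_subset (hq : 1 ≤ q) {S T : Finset ι} {E F : ℝ} (hST : T ⊆ S) (hEF : E ≤ F) :
    energyBall q S E ⊆ energyBall q T F := fun x ↦ by
  rw [mem_energyBall hq, mem_energyBall hq]
  exact fun h ↦ ⟨fun i hi ↦ h.1 i (hST hi), h.2.trans hEF⟩

lemma card_energyBall_le (hq : 1 ≤ q) {S T : Finset ι} {E F : ℝ} (hST : T ⊆ S) (hEF : E ≤ F) :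
    (#(energyBall q S E) : ℝ) ≤ #(energyBall q T F) :=
  Nat.cast_le.2 (card_le_card (energyBall_subset hq hST hEF))

lemma card_energyBall_pos (hq : 1 ≤ q) {E : ℝ} (hE : 0 ≤ E) :
    (0 : ℝ) < #(energyBall (ι := ι) q ∅ E) := by
  refine Nat.cast_pos.2 (card_pos.2 ⟨0, (mem_energyBall hq).2 ⟨by simp, ?_⟩⟩)
  simpa [energy, Real.zero_rpow (by linarith : q ≠ 0)] using hE

section Growth

variable {S : Finset ι} {E : ℝ}

lemma sum_energyBall_coord_eq_zero_le (hq : 1 ≤ q) {φ : ℕ → ℝ} (hφ : ∀ k, 0 ≤ φ k) {j : ι}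
    (hj : j ∉ S) {s : ℤ} (hs : |s| = 1) :
    ∑ x ∈ energyBall q S E with x j = 0, φ (unitCount x)
      ≤ ∑ y ∈ energyBall q S (E + 1) with y j = s, φ (unitCount y - 1) := by
  have hinj : Set.InjOn (fun x ↦ Function.update x j s)
      ({x ∈ energyBall q S E | x j = 0} : Finset (ι → ℤ)) := fun x hx y hy hxy ↦
    eq_of_update_eq_update ((mem_filter.1 hx).2.trans (mem_filter.1 hy).2.symm) hxy
  have hcount : ∀ x ∈ ({x ∈ energyBall q S E | x j = 0} : Finset (ι → ℤ)),
      φ (unitCount x) = φ (unitCount (Function.update x j s) - 1) := fun x hx ↦ by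
    have h := unitCount_update x j s
    rw [if_pos hs, (mem_filter.1 hx).2, abs_zero, if_neg zero_ne_one, add_zero] at h
    rw [h, Nat.add_sub_cancel]
  rw [sum_congr rfl hcount, ← sum_image (f := fun y ↦ φ (unitCount y - 1)) hinj]
  refine sum_le_sum_of_subset_of_nonneg (fun y hy ↦ ?_) fun _ _ _ ↦ hφ _
  obtain ⟨x, hx, rfl⟩ := mem_image.1 hy
  obtain ⟨hxB, hxj⟩ := mem_filter.1 hx
  obtain ⟨hxS, hxE⟩ := (mem_energyBall hq).1 hxB
  refine mem_filter.2 ⟨(mem_energyBall hq).2 ⟨fun i hi ↦ ?_, ?_⟩, Function.update_self ..⟩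
  · rw [Function.update_of_ne (ne_of_mem_of_not_mem hi hj)]
    exact hxS i hi
  · rw [energy_update_of_eq_zero hq hxj hs]
    linarith

lemma two_mul_sum_energyBall_coord_eq_zero_le (hq : 1 ≤ q) {φ : ℕ → ℝ} (hφ : ∀ k, 0 ≤ φ k)
    {j : ι} (hj : j ∉ S) :
    2 * ∑ x ∈ energyBall q S E with x j = 0, φ (unitCount x)
      ≤ ∑ y ∈ energyBall q S (E + 1) with |y j| = 1, φ (unitCount y - 1) := by
  have hplus := sum_energyBall_coord_eq_zero_le hq (E := E) hφ hj (s := 1) (by simp)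
  have hminus := sum_energyBall_coord_eq_zero_le hq (E := E) hφ hj (s := -1) (by simp)
  simp_rw [abs_eq (zero_le_one (α := ℤ)), filter_or]
  rw [sum_union (disjoint_filter.2 fun y _ h ↦ by rw [h]; norm_num)]
  linarith

lemma card_sub_le_card_coord_eq_zero (hq : 1 ≤ q) (S : Finset ι) (x : ι → ℤ) :
    (Fintype.card ι : ℝ) - #S - energy q x ≤ #{i ∈ univ \ S | x i = 0} := by
  have hcover : (univ : Finset ι) ⊆ {i ∈ univ \ S | x i = 0} ∪ S ∪ univ.filter (x · ≠ 0) := by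
    intro i _
    simp only [mem_union, mem_filter, mem_sdiff, mem_univ, true_and]
    tauto
  have hcard : (Fintype.card ι : ℝ) ≤ #{i ∈ univ \ S | x i = 0} + #S + #{i | x i ≠ 0} := by
    exact_mod_cast (card_le_card hcover).trans ((card_union_le _ _).trans
      (Nat.add_le_add_right (card_union_le _ _) _))
  linarith [card_ne_zero_le_energy hq x]

/-
Double counting of the pairs `(x, y)` where `y` arises from `x` by turning a zero coordinate
outside `S` into `±1`.
-/
lemma two_mul_sum_energyBall_le (hq : 1 ≤ q) {φ : ℕ → ℝ} (hφ : ∀ k, 0 ≤ φ k) :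
    2 * (Fintype.card ι - #S - E) * ∑ x ∈ energyBall q S E, φ (unitCount x)
      ≤ ∑ y ∈ energyBall q S (E + 1), (unitCount y : ℝ) * φ (unitCount y - 1) := by
  have hpairs : 2 * ∑ x ∈ energyBall q S E, #{j ∈ univ \ S | x j = 0} * φ (unitCount x)
      ≤ ∑ y ∈ energyBall q S (E + 1), #{j ∈ univ \ S | |y j| = 1} * φ (unitCount y - 1) := by
    have h := sum_le_sum fun j (hj : j ∈ univ \ S) ↦
      two_mul_sum_energyBall_coord_eq_zero_le hq (E := E) hφ (mem_sdiff.1 hj).2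
    simp_rw [sum_filter] at h
    rw [← mul_sum, sum_comm, sum_comm (t := energyBall q S (E + 1))] at h
    simpa only [← sum_filter, sum_const, nsmul_eq_mul] using h
  have hzero : ∀ x ∈ energyBall q S E, (Fintype.card ι - #S - E) * φ (unitCount x)
      ≤ #{j ∈ univ \ S | x j = 0} * φ (unitCount x) := fun x hx ↦
    mul_le_mul_of_nonneg_right (by
      linarith [card_sub_le_card_coord_eq_zero hq S x, ((mem_energyBall hq).1 hx).2]) (hφ _)
  have hone : ∀ y ∈ energyBall q S (E + 1), #{j ∈ univ \ S | |y j| = 1} * φ (unitCount y - 1)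
      ≤ (unitCount y : ℝ) * φ (unitCount y - 1) := fun y _ ↦
    mul_le_mul_of_nonneg_right
      (Nat.cast_le.2 (card_le_card (filter_subset_filter _ (subset_univ _)))) (hφ _)
  have hlower := sum_le_sum hzero
  rw [← mul_sum] at hlower
  linarith [sum_le_sum hone]

lemma card_mul_card_energyBall_le (hq : 1 ≤ q) (hS : #S ≤ 1)
    (hE : 4 * (E + 1) ≤ Fintype.card ι) :
    3 / 2 * (Fintype.card ι : ℝ) * #(energyBall q S E) ≤ (E + 1) * #(energyBall q S (E + 1)) := by
  have hgrow := two_mul_sum_energyBall_le hq (S := S) (E := E) (φ := fun _ ↦ 1)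
    fun _ ↦ zero_le_one
  simp only [sum_const, nsmul_eq_mul, mul_one] at hgrow
  have hcount : ∑ y ∈ energyBall q S (E + 1), (unitCount y : ℝ)
      ≤ #(energyBall q S (E + 1)) • (E + 1) :=
    sum_le_card_nsmul _ _ _ fun y hy ↦
      (unitCount_le_energy hq y).trans ((mem_energyBall hq).1 hy).2
  rw [nsmul_eq_mul, mul_comm _ (E + 1)] at hcount
  have hS' : (#S : ℝ) ≤ 1 := by exact_mod_cast hS
  refine le_trans (mul_le_mul_of_nonneg_right ?_ (Nat.cast_nonneg _)) (hgrow.trans hcount)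
  linarith

lemma card_energyBall_le_sixth [Nonempty ι] (hq : 1 ≤ q) (hS : #S ≤ 1)
    (hE : 4 * (E + 1) ≤ Fintype.card ι) :
    (#(energyBall q S E) : ℝ) ≤ 1 / 6 * #(energyBall q S (E + 1)) := by
  have hcard : (0 : ℝ) < Fintype.card ι := Nat.cast_pos.2 Fintype.card_pos
  have h := (card_mul_card_energyBall_le hq hS hE).trans
    (mul_le_mul_of_nonneg_right (by linarith : E + 1 ≤ Fintype.card ι / 4) (Nat.cast_nonneg _))
  refine le_of_mul_le_mul_left ?_ hcard
  linarith

lemma card_energyBall_sub_le [Nonempty ι] (hq : 1 ≤ q) (hS : #S ≤ 1)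
    (hE : 4 * (E + 1) ≤ Fintype.card ι) (k : ℕ) :
    (#(energyBall q S (E - k)) : ℝ) ≤ (1 / 6) ^ k * #(energyBall q S E) := by
  induction k with
  | zero => simp
  | succ k ih =>
    have h := card_energyBall_le_sixth hq hS (E := E - (k + 1 : ℕ))
      (by push_cast; linarith [k.cast_nonneg (α := ℝ)])
    rw [show E - (k + 1 : ℕ) + 1 = E - k by push_cast; ring] at h
    rw [pow_succ]
    linarith

lemma card_mul_sum_inv_unitCount_le (hq : 1 ≤ q) (hS : #S ≤ 1)
    (hE : 4 * (E + 1) ≤ Fintype.card ι) :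
    3 / 2 * (Fintype.card ι : ℝ) * ∑ x ∈ energyBall q S E, ((unitCount x : ℝ) + 1)⁻¹
      ≤ #(energyBall q S (E + 1)) := by
  have hgrow := two_mul_sum_energyBall_le hq (S := S) (E := E) (φ := fun k ↦ ((k : ℝ) + 1)⁻¹)
    fun _ ↦ by positivity
  have hone : ∀ y ∈ energyBall q S (E + 1),
      (unitCount y : ℝ) * (((unitCount y - 1 : ℕ) : ℝ) + 1)⁻¹ ≤ 1 := fun y _ ↦ by
    rcases Nat.eq_zero_or_pos (unitCount y) with h | h
    · simp [h]
    · rw [Nat.cast_sub h, Nat.cast_one, sub_add_cancel]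
      exact mul_inv_le_one
  have hS' : (#S : ℝ) ≤ 1 := by exact_mod_cast hS
  refine le_trans (mul_le_mul_of_nonneg_right ?_ (sum_nonneg fun _ _ ↦ by positivity))
    (hgrow.trans ((sum_le_card_nsmul _ _ _ hone).trans_eq ?_))
  · linarith
  · rw [nsmul_one]

end Growth

end EnergyBall

section Moments

lemma sum_half_pow_natAbs_le (s : Finset ℤ) : ∑ v ∈ s, (1 / 2 : ℝ) ^ v.natAbs ≤ 4 := by
  have half : ∀ t : Finset ℤ, Set.InjOn Int.natAbs t → ∑ v ∈ t, (1 / 2 : ℝ) ^ v.natAbs ≤ 2 :=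
    fun t ht ↦ by
      rw [← sum_image (f := fun k ↦ (1 / 2 : ℝ) ^ k) ht]
      exact (summable_geometric_two.sum_le_tsum _ fun _ _ ↦ by positivity).trans_eq
        tsum_geometric_two
  rw [← sum_filter_add_sum_filter_not s (0 ≤ ·)]
  have hnonneg := half ({v ∈ s | 0 ≤ v}) fun v hv w hw h ↦
    Int.natAbs_inj_of_nonneg_of_nonneg (mem_filter.1 hv).2 (mem_filter.1 hw).2 |>.1 h
  have hneg := half ({v ∈ s | ¬ 0 ≤ v}) fun v hv w hw h ↦
    Int.natAbs_inj_of_nonpos_of_nonpos (not_le.1 (mem_filter.1 hv).2).le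
      (not_le.1 (mem_filter.1 hw).2).le |>.1 h
  linarith

lemma sum_le_of_fiber_le_geometric {ι : Type*} (B : Finset (ι → ℤ)) (i : ι) (ψ : (ι → ℤ) → ℝ)
    {a : ℝ} (ha : 0 ≤ a)
    (hfiber : ∀ v, ∑ x ∈ B with x i = v, ψ x ≤ (1 / 2) ^ v.natAbs * a) :
    ∑ x ∈ B, ψ x ≤ 4 * a := by
  classical
  rw [← sum_fiberwise_of_maps_to (fun x hx ↦ mem_image_of_mem (fun x ↦ x i) hx)]
  refine (sum_le_sum fun v _ ↦ hfiber v).trans ?_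
  rw [← sum_mul]
  exact mul_le_mul_of_nonneg_right (sum_half_pow_natAbs_le _) ha

lemma succ_sq_le_two_mul_three_pow (k : ℕ) : ((k : ℝ) + 1) ^ 2 ≤ 2 * 3 ^ k := by
  induction k with
  | zero => norm_num
  | succ k ih =>
    rcases Nat.eq_zero_or_pos k with rfl | h
    · norm_num
    · have hk : (1 : ℝ) ≤ k := by exact_mod_cast h
      rw [pow_succ 3]
      push_cast
      nlinarith

variable {ι : Type*} [Fintype ι] [DecidableEq ι] {q N : ℝ}

lemma sum_fiber_energyBall_le (hq : 1 ≤ q) (i : ι) (v : ℤ) {ψ ψ' : (ι → ℤ) → ℝ}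
    (hψ' : ∀ x, 0 ≤ ψ' x) (hψ : ∀ x, x i = v → ψ x = ψ' (Function.update x i 0)) :
    ∑ x ∈ energyBall q ∅ N with x i = v, ψ x
      ≤ ∑ x ∈ energyBall q {i} (N - |(v : ℝ)| ^ q), ψ' x := by
  have hinj : Set.InjOn (fun x ↦ Function.update x i 0)
      ({x ∈ energyBall q ∅ N | x i = v} : Finset (ι → ℤ)) := fun x hx y hy hxy ↦
    eq_of_update_eq_update ((mem_filter.1 hx).2.trans (mem_filter.1 hy).2.symm) hxy
  rw [sum_congr rfl fun x hx ↦ hψ x (mem_filter.1 hx).2, ← sum_image hinj]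
  refine sum_le_sum_of_subset_of_nonneg (fun y hy ↦ ?_) fun _ _ _ ↦ hψ' _
  obtain ⟨x, hx, rfl⟩ := mem_image.1 hy
  obtain ⟨hxB, rfl⟩ := mem_filter.1 hx
  refine (mem_energyBall hq).2 ⟨by simp, ?_⟩
  rw [energy_update_zero hq]
  linarith [((mem_energyBall hq).1 hxB).2]

lemma card_energyBall_singleton_le (hq : 1 ≤ q) (hN : 4 * N ≤ Fintype.card ι) (i : ι) {k : ℕ}
    {E : ℝ} (hE : E + k ≤ N - 1) :
    (#(energyBall q {i} E) : ℝ) ≤ (1 / 6) ^ k * #(energyBall q {i} (N - 1)) := by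
  have : Nonempty ι := ⟨i⟩
  exact (card_energyBall_le hq subset_rfl (by linarith)).trans
    (card_energyBall_sub_le hq (card_singleton i).le (by linarith) k)

lemma card_mul_card_energyBall_singleton_le (hq : 1 ≤ q) (hN0 : 0 ≤ N)
    (hN : 4 * N ≤ Fintype.card ι) (i : ι) :
    3 / 2 * (Fintype.card ι : ℝ) * #(energyBall q {i} (N - 1))
      ≤ N * #(energyBall (ι := ι) q ∅ N) := by
  have h := card_mul_card_energyBall_le hq (card_singleton i).le (E := N - 1) (by linarith)
  rw [sub_add_cancel] at h
  exact h.trans (mul_le_mul_of_nonneg_left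
    (card_energyBall_le hq (empty_subset _) le_rfl) hN0)

lemma sum_fiber_sq_le (hq : 1 ≤ q) (hN : 4 * N ≤ Fintype.card ι) (i : ι) (v : ℤ) :
    ∑ x ∈ energyBall q ∅ N with x i = v, (x i : ℝ) ^ 2
      ≤ (1 / 2) ^ v.natAbs * (4 * #(energyBall q {i} (N - 1))) := by
  rcases eq_or_ne v 0 with rfl | hv
  · rw [sum_eq_zero fun x hx ↦ by simp [(mem_filter.1 hx).2]]
    positivity
  · obtain ⟨k, hk⟩ := Nat.exists_eq_add_of_lt (Int.natAbs_pos.2 hv)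
    rw [zero_add] at hk
    have habs : |(v : ℝ)| = k + 1 := by rw [← Int.cast_abs, Int.abs_eq_natAbs, hk]; simp
    have hfiber := sum_fiber_energyBall_le (N := N) hq i v (ψ := fun x ↦ (x i : ℝ) ^ 2)
      (ψ' := fun _ ↦ (v : ℝ) ^ 2) (fun _ ↦ by positivity) fun x hx ↦ by rw [hx]
    rw [sum_const, nsmul_eq_mul] at hfiber
    have hcard := card_energyBall_singleton_le hq hN i (k := k) (E := N - |(v : ℝ)| ^ q)
      (by linarith [abs_le_abs_rpow hq v])
    have hsq : (v : ℝ) ^ 2 ≤ 2 * 3 ^ k := by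
      rw [← sq_abs, habs]
      exact succ_sq_le_two_mul_three_pow k
    calc ∑ x ∈ energyBall q ∅ N with x i = v, (x i : ℝ) ^ 2
        ≤ (1 / 6) ^ k * #(energyBall q {i} (N - 1)) * (2 * 3 ^ k) :=
          hfiber.trans (mul_le_mul hcard hsq (by positivity) (by positivity))
      _ = (1 / 6 * 3) ^ k * 2 * #(energyBall q {i} (N - 1)) := by rw [mul_pow]; ring
      _ = (1 / 2) ^ v.natAbs * (4 * #(energyBall q {i} (N - 1))) := by
          rw [hk, pow_succ]; norm_num; ring

lemma card_mul_sum_sq_le (hq : 1 ≤ q) (hN0 : 0 ≤ N) (hN : 4 * N ≤ Fintype.card ι) (i : ι) :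
    (Fintype.card ι : ℝ) * ∑ x ∈ energyBall q ∅ N, (x i : ℝ) ^ 2
      ≤ 16 * N * #(energyBall (ι := ι) q ∅ N) := by
  have hsum := mul_le_mul_of_nonneg_left (sum_le_of_fiber_le_geometric _ i _ (by positivity)
    (sum_fiber_sq_le hq hN i)) (Nat.cast_nonneg (α := ℝ) (Fintype.card ι))
  have hcard := card_mul_card_energyBall_singleton_le hq hN0 hN i
  have hball : 0 ≤ N * #(energyBall (ι := ι) q ∅ N) := by positivity
  linarith

lemma card_mul_sum_fiber_inv_unitCount_le (hq : 1 ≤ q) (hN : 4 * N ≤ Fintype.card ι) (i : ι)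
    {k : ℕ} {E : ℝ} (hE : E + (k + 2) ≤ N) :
    (Fintype.card ι : ℝ) * ∑ x ∈ energyBall q {i} E, ((unitCount x : ℝ) + 1)⁻¹
      ≤ (1 / 6) ^ k * #(energyBall (ι := ι) q ∅ N) := by
  have hinv := card_mul_sum_inv_unitCount_le hq (card_singleton i).le (E := E)
    (by linarith [k.cast_nonneg (α := ℝ)])
  have hcard := card_energyBall_singleton_le hq hN i (k := k) (E := E + 1) (by linarith)
  have hball : (1 / 6 : ℝ) ^ k * #(energyBall q {i} (N - 1))
      ≤ (1 / 6) ^ k * #(energyBall (ι := ι) q ∅ N) :=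
    mul_le_mul_of_nonneg_left (card_energyBall_le hq (empty_subset _) (by linarith))
      (by positivity)
  have hsum_nonneg :
      0 ≤ (Fintype.card ι : ℝ) * ∑ x ∈ energyBall q {i} E, ((unitCount x : ℝ) + 1)⁻¹ :=
    mul_nonneg (Nat.cast_nonneg _) (sum_nonneg fun _ _ ↦ by positivity)
  linarith [hsum_nonneg]

lemma card_mul_sum_fiber_large_coord_le (hq : 1 ≤ q) (hN : 4 * N ≤ Fintype.card ι) (i : ι) (v : ℤ) :
    (Fintype.card ι : ℝ) * ∑ x ∈ energyBall q ∅ N with x i = v,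
        (if 2 ≤ |x i| then |(x i : ℝ)| ^ q else 0) * ((unitCount x : ℝ) + 1)⁻¹
      ≤ (1 / 2) ^ v.natAbs * (36 * #(energyBall (ι := ι) q ∅ N)) := by
  by_cases hv : 2 ≤ |v|
  swap
  · rw [sum_eq_zero fun x hx ↦ by rw [(mem_filter.1 hx).2, if_neg hv, zero_mul], mul_zero]
    positivity
  set V := |(v : ℝ)| ^ q
  have hvV : (v.natAbs : ℝ) ≤ V := by simpa using abs_le_abs_rpow hq v
  have hfloor : v.natAbs ≤ ⌊V⌋₊ := Nat.le_floor hvV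
  have hfloor_le : (⌊V⌋₊ : ℝ) ≤ V := Nat.floor_le (by positivity)
  obtain ⟨k, hk⟩ : ∃ k, ⌊V⌋₊ = k + 2 := Nat.exists_eq_add_of_le'
    (by rw [Int.abs_eq_natAbs] at hv; omega)
  have hfiber := sum_fiber_energyBall_le (N := N) hq i v
    (ψ := fun x ↦ (if 2 ≤ |x i| then |(x i : ℝ)| ^ q else 0) * ((unitCount x : ℝ) + 1)⁻¹)
    (ψ' := fun x ↦ V * ((unitCount x : ℝ) + 1)⁻¹) (fun x ↦ by positivity)
    fun x hx ↦ by
      have hcount := unitCount_update x i 0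
      rw [hx, if_neg (by omega), abs_zero, if_neg zero_ne_one, add_zero, add_zero] at hcount
      rw [hcount, hx, if_pos hv]
  rw [← mul_sum] at hfiber
  have hdecay := card_mul_sum_fiber_inv_unitCount_le hq hN i (k := k) (E := N - V) (by
    rw [hk] at hfloor_le; push_cast at hfloor_le; linarith)
  have hV : V ≤ 2 ^ (k + 2) := by
    rw [← hk]
    exact (Nat.lt_floor_add_one V).le.trans (by exact_mod_cast Nat.lt_two_pow_self)
  calc _ ≤ V * (Fintype.card ι * ∑ x ∈ energyBall q {i} (N - V), ((unitCount x : ℝ) + 1)⁻¹) :=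
        (mul_le_mul_of_nonneg_left hfiber (Nat.cast_nonneg _)).trans_eq (mul_left_comm _ _ _)
    _ ≤ 2 ^ (k + 2) * ((1 / 6) ^ k * #(energyBall (ι := ι) q ∅ N)) :=
        mul_le_mul hV hdecay (mul_nonneg (Nat.cast_nonneg _) (sum_nonneg fun _ _ ↦ by positivity))
          (by positivity)
    _ = (2 * (1 / 6)) ^ k * (4 * #(energyBall (ι := ι) q ∅ N)) := by rw [mul_pow]; ring
    _ = (1 / 3) ^ ⌊V⌋₊ * (36 * #(energyBall (ι := ι) q ∅ N)) := by
        rw [hk, pow_add, show (2 * (1 / 6) : ℝ) = 1 / 3 by norm_num]; ring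
    _ ≤ (1 / 2) ^ v.natAbs * (36 * #(energyBall (ι := ι) q ∅ N)) := by
        refine mul_le_mul_of_nonneg_right ?_ (by positivity)
        exact (pow_le_pow_of_le_one (by norm_num) (by norm_num) hfloor).trans
          (pow_le_pow_left₀ (by norm_num) (by norm_num) _)

lemma sum_large_coords_mul_inv_unitCount_le [Nonempty ι] (hq : 1 ≤ q)
    (hN : 4 * N ≤ Fintype.card ι) :
    ∑ x ∈ energyBall (ι := ι) q ∅ N,
        (∑ i, if 2 ≤ |x i| then |(x i : ℝ)| ^ q else 0) * ((unitCount x : ℝ) + 1)⁻¹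
      ≤ 144 * #(energyBall (ι := ι) q ∅ N) := by
  have hcard : (0 : ℝ) < Fintype.card ι := Nat.cast_pos.2 Fintype.card_pos
  refine le_of_mul_le_mul_left ?_ hcard
  have hcoord : ∀ i ∈ (univ : Finset ι), ∑ x ∈ energyBall (ι := ι) q ∅ N, Fintype.card ι *
      ((if 2 ≤ |x i| then |(x i : ℝ)| ^ q else 0) * ((unitCount x : ℝ) + 1)⁻¹)
      ≤ 144 * #(energyBall (ι := ι) q ∅ N) := fun i _ ↦
    (sum_le_of_fiber_le_geometric (a := 36 * #(energyBall (ι := ι) q ∅ N)) _ i _ (by positivity)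
      fun v ↦ by
        rw [← mul_sum]
        exact card_mul_sum_fiber_large_coord_le hq hN i v).trans_eq
      (by ring)
  simp_rw [sum_mul, mul_sum]
  rw [sum_comm]
  refine (sum_le_card_nsmul _ _ _ hcoord).trans_eq ?_
  rw [nsmul_eq_mul, card_univ]

lemma mul_sum_low_energy_inv_unitCount_le (hq : 1 ≤ q) (hN : 4 * N ≤ Fintype.card ι) :
    N * ∑ x ∈ energyBall (ι := ι) q ∅ (N - 1), ((unitCount x : ℝ) + 1)⁻¹
      ≤ #(energyBall (ι := ι) q ∅ N) := by
  have h := card_mul_sum_inv_unitCount_le hq (S := (∅ : Finset ι)) (E := N - 1) (by simp)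
    (by linarith)
  rw [sub_add_cancel] at h
  refine le_trans (mul_le_mul_of_nonneg_right ?_ (sum_nonneg fun _ _ ↦ by positivity)) h
  linarith [(Fintype.card ι).cast_nonneg (α := ℝ)]

/-
A point of energy more than `N - 1` either has about `N` unit coordinates or has most of its energy
on coordinates of size at least `2`.
-/
lemma mul_sum_inv_unitCount_le [Nonempty ι] (hq : 1 ≤ q) (hN : 4 * N ≤ Fintype.card ι) :
    N * ∑ x ∈ energyBall (ι := ι) q ∅ N, ((unitCount x : ℝ) + 1)⁻¹
      ≤ 146 * #(energyBall (ι := ι) q ∅ N) := by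
  set B := energyBall (ι := ι) q ∅ N
  set large : (ι → ℤ) → ℝ := fun x ↦ ∑ i, if 2 ≤ |x i| then |(x i : ℝ)| ^ q else 0
  have hpoint : ∀ x ∈ B, N * ((unitCount x : ℝ) + 1)⁻¹
      ≤ N * (if energy q x ≤ N - 1 then ((unitCount x : ℝ) + 1)⁻¹ else 0)
        + large x * ((unitCount x : ℝ) + 1)⁻¹ + 1 := fun x _ ↦ by
    have hlarge : 0 ≤ large x := sum_nonneg fun i _ ↦ by positivity
    split_ifs with h
    · linarith [mul_nonneg hlarge (by positivity : 0 ≤ ((unitCount x : ℝ) + 1)⁻¹)]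
    · have henergy : N ≤ large x + (unitCount x + 1) := by
        linarith [energy_eq_sum_add_unitCount hq x]
      calc N * ((unitCount x : ℝ) + 1)⁻¹
          ≤ (large x + (unitCount x + 1)) * ((unitCount x : ℝ) + 1)⁻¹ := by gcongr
        _ = N * 0 + large x * ((unitCount x : ℝ) + 1)⁻¹ + 1 := by field_simp; ring
  have hlow : ({x ∈ B | energy q x ≤ N - 1} : Finset (ι → ℤ)) = energyBall q ∅ (N - 1) := by
    ext x
    simp only [B, mem_filter, mem_energyBall hq]
    exact ⟨fun h ↦ ⟨h.1.1, h.2⟩, fun h ↦ ⟨⟨h.1, by linarith [h.2]⟩, h.2⟩⟩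
  have hsum := sum_le_sum hpoint
  rw [sum_add_distrib, sum_add_distrib, ← mul_sum, ← mul_sum, ← sum_filter, hlow, sum_const,
    nsmul_one] at hsum
  linarith [mul_sum_low_energy_inv_unitCount_le hq hN,
    sum_large_coords_mul_inv_unitCount_le hq hN]

end Moments

section PermutationAverages

variable {ι κ : Type*} [Fintype ι] [DecidableEq ι] {m n : ℕ}

lemma expect_perm_comp_embedding (F : (Fin n ↪ ι) → ℝ) (e : Fin n ↪ ι) :
    𝔼 σ : Equiv.Perm ι, F (e.trans σ.toEmbedding) = 𝔼 e', F e' := by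
  have : Nonempty (Fin n ↪ ι) := ⟨e⟩
  have hconst (e' : Fin n ↪ ι) : 𝔼 σ : Equiv.Perm ι, F (e'.trans σ.toEmbedding)
      = 𝔼 σ : Equiv.Perm ι, F (e.trans σ.toEmbedding) := by
    have := Equiv.Perm.isMultiplyPretransitive ι n
    obtain ⟨π, rfl⟩ := MulAction.exists_smul_eq (Equiv.Perm ι) e e'
    exact Fintype.expect_equiv (Equiv.mulRight π) _ _ fun σ ↦ rfl
  calc 𝔼 σ : Equiv.Perm ι, F (e.trans σ.toEmbedding)
      = 𝔼 e' : Fin n ↪ ι, 𝔼 σ : Equiv.Perm ι, F (e'.trans σ.toEmbedding) := by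
        simp only [hconst, Fintype.expect_const]
    _ = 𝔼 σ : Equiv.Perm ι, 𝔼 e' : Fin n ↪ ι, F (e'.trans σ.toEmbedding) := expect_comm ..
    _ = 𝔼 _σ : Equiv.Perm ι, 𝔼 e', F e' := expect_congr rfl fun σ _ ↦
        Fintype.expect_equiv (Equiv.embeddingCongr (Equiv.refl _) σ) _ _ fun e' ↦ rfl
    _ = 𝔼 e', F e' := Fintype.expect_const _

omit [DecidableEq ι] in
lemma sum_embedding_mul_le {F : (Fin m ↪ ι) → ℝ} {G : (Fin n ↪ ι) → ℝ} (hF : ∀ e, 0 ≤ F e)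
    (hG : ∀ e, 0 ≤ G e) :
    ∑ e : Fin (m + n) ↪ ι, F ((Fin.castAddEmb n).trans e) * G ((Fin.natAddEmb m).trans e)
      ≤ (∑ e, F e) * ∑ e, G e := by
  have hinj : Function.Injective fun e : Fin (m + n) ↪ ι ↦
      ((Fin.castAddEmb n).trans e, (Fin.natAddEmb m).trans e) := by
    intro e e' h
    obtain ⟨h₁, h₂⟩ := Prod.mk.inj h
    exact DFunLike.ext _ _ fun j ↦
      Fin.addCases (fun i ↦ DFunLike.congr_fun h₁ i) (fun i ↦ DFunLike.congr_fun h₂ i) j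
  rw [sum_mul_sum, ← sum_product']
  exact (sum_map univ ⟨_, hinj⟩ fun z ↦ F z.1 * G z.2).symm.trans_le <|
    sum_le_sum_of_subset_of_nonneg (subset_univ _) fun z _ _ ↦ mul_nonneg (hF _) (hG _)

lemma expect_perm_mul_le {F : (Fin m ↪ ι) → ℝ} {G : (Fin n ↪ ι) → ℝ} (hF : ∀ e, 0 ≤ F e)
    (hG : ∀ e, 0 ≤ G e) {e₁ : Fin m ↪ ι} {e₂ : Fin n ↪ ι}
    (hdisj : Disjoint (Set.range e₁) (Set.range e₂)) :
    𝔼 σ : Equiv.Perm ι, F (e₁.trans σ.toEmbedding) * G (e₂.trans σ.toEmbedding)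
      ≤ Fintype.card (Fin m ↪ ι) * Fintype.card (Fin n ↪ ι) / Fintype.card (Fin (m + n) ↪ ι)
        * ((𝔼 e, F e) * 𝔼 e, G e) := by
  let e := Fin.Embedding.append hdisj
  have hpos : 0 < (Fintype.card (Fin (m + n) ↪ ι) : ℝ) :=
    Nat.cast_pos.2 (Fintype.card_pos_iff.2 ⟨e⟩)
  have h₁ : (Fin.castAddEmb n).trans e = e₁ := by ext i; simp [e]
  have h₂ : (Fin.natAddEmb m).trans e = e₂ := by ext i; simp [e]
  have havg := expect_perm_comp_embedding
    (fun e ↦ F ((Fin.castAddEmb n).trans e) * G ((Fin.natAddEmb m).trans e)) e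
  simp only [← Function.Embedding.trans_assoc, h₁, h₂] at havg
  rw [havg, Fintype.expect_eq_sum_div_card, div_mul_eq_mul_div]
  gcongr
  calc _ ≤ (∑ e, F e) * ∑ e, G e := sum_embedding_mul_le hF hG
    _ = _ := by rw [← Fintype.card_mul_expect F, ← Fintype.card_mul_expect G]; ring

lemma expect_perm_mul_eq_of_swap_invariant {R : Equiv.Perm ι → ℝ} {a b : ι}
    (hR : ∀ σ, R (σ * Equiv.swap a b) = R σ) (c : ι → ℝ) :
    𝔼 σ, R σ * c (σ b) = 𝔼 σ, R σ * ((c (σ a) + c (σ b)) / 2) := by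
  have hswap : 𝔼 σ, R σ * c (σ a) = 𝔼 σ, R σ * c (σ b) :=
    Fintype.expect_equiv (Equiv.mulRight (Equiv.swap a b)) _ _ fun σ ↦ by
      rw [Equiv.coe_mulRight, hR, Equiv.Perm.mul_apply, Equiv.swap_apply_right]
  simp only [mul_div_assoc', mul_add, ← expect_div, expect_add_distrib, hswap, add_self_div_two]

lemma expect_perm_mul_prod_eq_of_swap_invariant (e : κ × Fin 2 ↪ ι) (c : ι → ℝ) (T : Finset κ)
    {R : Equiv.Perm ι → ℝ}
    (hR : ∀ l ∈ T, ∀ σ, R (σ * Equiv.swap (e (l, 0)) (e (l, 1))) = R σ) :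
    𝔼 σ, R σ * ∏ l ∈ T, c (σ (e (l, 1)))
      = 𝔼 σ, R σ * ∏ l ∈ T, (c (σ (e (l, 0))) + c (σ (e (l, 1)))) / 2 := by
  classical
  have happly {l l' : κ} (h : l ≠ l') (j : Fin 2) (σ : Equiv.Perm ι) :
      (σ * Equiv.swap (e (l, 0)) (e (l, 1))) (e (l', j)) = σ (e (l', j)) := by
    rw [Equiv.Perm.mul_apply, Equiv.swap_apply_of_ne_of_ne] <;> simp [h.symm]
  induction T using Finset.induction_on generalizing R with
  | empty => simp
  | insert l T hl ih =>
    have hne {l' : κ} (hl' : l' ∈ T) : l' ≠ l := ne_of_mem_of_not_mem hl' hl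
    calc 𝔼 σ, R σ * ∏ l ∈ insert l T, c (σ (e (l, 1)))
        = 𝔼 σ, (R σ * c (σ (e (l, 1)))) * ∏ l ∈ T, c (σ (e (l, 1))) := by
          simp only [prod_insert hl, mul_assoc]
      _ = 𝔼 σ, (R σ * c (σ (e (l, 1)))) * ∏ l ∈ T, (c (σ (e (l, 0))) + c (σ (e (l, 1)))) / 2 :=
          ih fun l' hl' σ ↦ by rw [hR l' (mem_insert_of_mem hl'), happly (hne hl')]
      _ = 𝔼 σ, (R σ * ∏ l ∈ T, (c (σ (e (l, 0))) + c (σ (e (l, 1)))) / 2) * c (σ (e (l, 1))) := by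
          simp only [mul_right_comm]
      _ = 𝔼 σ, (R σ * ∏ l ∈ T, (c (σ (e (l, 0))) + c (σ (e (l, 1)))) / 2) *
            ((c (σ (e (l, 0))) + c (σ (e (l, 1)))) / 2) :=
          expect_perm_mul_eq_of_swap_invariant (fun σ ↦ by
            rw [hR l (mem_insert_self l T)]
            congr 1
            exact prod_congr rfl fun l' hl' ↦ by simp only [happly (hne hl').symm]) c
      _ = _ := by simp only [prod_insert hl, mul_assoc, mul_comm ((_ : ℝ) / 2)]

end PermutationAverages

section PairSums

variable {ι κ : Type*}

/-- The pair of indices `e (l, 0)`, `e (l, 1)`. -/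
def pairAt (e : κ × Fin 2 ↪ ι) (l : κ) : Fin 2 ↪ ι := (Function.Embedding.sectR l (Fin 2)).trans e

lemma disjoint_range_pairAt (e : κ × Fin 2 ↪ ι) {l l' : κ} (h : l ≠ l') :
    Disjoint (Set.range (pairAt e l)) (Set.range (pairAt e l')) := by
  rw [Set.disjoint_left]
  rintro _ ⟨j, rfl⟩ ⟨j', hj⟩
  exact h (congrArg Prod.fst (e.injective hj)).symm

variable [Fintype ι] [Fintype κ]

lemma card_embedding_ratio (hι : 4 ≤ Fintype.card ι) :
    (Fintype.card (Fin 2 ↪ ι) * Fintype.card (Fin 2 ↪ ι) / Fintype.card (Fin (2 + 2) ↪ ι) : ℝ)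
      = 1 + (4 * Fintype.card ι - 6) / ((Fintype.card ι - 2) * (Fintype.card ι - 3)) := by
  obtain ⟨k, hk⟩ := Nat.exists_eq_add_of_le hι
  have h₂ : (4 + k - 2 : ℝ) = k + 2 := by ring
  have h₃ : (4 + k - 3 : ℝ) = k + 1 := by ring
  simp only [Fintype.card_embedding_eq, Fintype.card_fin, hk, Nat.descFactorial, tsub_zero, mul_one,
    show 4 + k - 1 = k + 3 by omega, show 4 + k - 2 = k + 2 by omega,
    show 4 + k - 3 = k + 1 by omega]
  push_cast
  rw [h₂, h₃]
  field_simp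
  ring

/-- The sum of `F` over the images under `σ` of the pairs listed by `e`. -/
def pairSum (F : (Fin 2 ↪ ι) → ℝ) (e : κ × Fin 2 ↪ ι) (σ : Equiv.Perm ι) : ℝ :=
  ∑ l, F ((pairAt e l).trans σ.toEmbedding)

variable {F : (Fin 2 ↪ ι) → ℝ} (e : κ × Fin 2 ↪ ι)

variable [DecidableEq ι]

lemma expect_pairSum : 𝔼 σ, pairSum F e σ = Fintype.card κ * 𝔼 p, F p := by
  simp only [pairSum, expect_sum_comm, expect_perm_comp_embedding, sum_const, card_univ,
    nsmul_eq_mul]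

lemma expect_pairSum_sq_le (hι : 4 ≤ Fintype.card ι) (hF₀ : ∀ p, 0 ≤ F p) (hF₁ : ∀ p, F p ≤ 1) :
    𝔼 σ, pairSum F e σ ^ 2 ≤ Fintype.card κ * (𝔼 p, F p)
      + (1 + (4 * Fintype.card ι - 6) / ((Fintype.card ι - 2) * (Fintype.card ι - 3)))
        * (Fintype.card κ * 𝔼 p, F p) ^ 2 := by
  classical
  set ρ : ℝ := 1 + (4 * Fintype.card ι - 6) / ((Fintype.card ι - 2) * (Fintype.card ι - 3)) with hρ
  have hρ₀ : 0 ≤ ρ := by rw [hρ, ← card_embedding_ratio hι]; positivity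
  have hpair (l l' : κ) : 𝔼 σ : Equiv.Perm ι,
      F ((pairAt e l).trans σ.toEmbedding) * F ((pairAt e l').trans σ.toEmbedding)
        ≤ (if l = l' then 𝔼 p, F p else 0) + ρ * ((𝔼 p, F p) * 𝔼 p, F p) := by
    rcases eq_or_ne l l' with rfl | hne
    · have hsq : 0 ≤ ρ * ((𝔼 p, F p) * 𝔼 p, F p) := mul_nonneg hρ₀ (mul_self_nonneg _)
      rw [if_pos rfl, ← expect_perm_comp_embedding F (pairAt e l)]
      exact (expect_le_expect fun σ _ ↦ mul_le_of_le_one_right (hF₀ _) (hF₁ _)).trans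
        (le_add_of_nonneg_right (by rwa [expect_perm_comp_embedding]))
    · rw [if_neg hne, zero_add, hρ, ← card_embedding_ratio hι]
      exact expect_perm_mul_le hF₀ hF₀ (disjoint_range_pairAt e hne)
  calc 𝔼 σ, pairSum F e σ ^ 2
      = ∑ l, ∑ l', 𝔼 σ : Equiv.Perm ι,
          F ((pairAt e l).trans σ.toEmbedding) * F ((pairAt e l').trans σ.toEmbedding) := by
        simp only [pairSum, sq, sum_mul_sum, expect_sum_comm]
    _ ≤ ∑ l, ∑ l', ((if l = l' then 𝔼 p, F p else 0) + ρ * ((𝔼 p, F p) * 𝔼 p, F p)) :=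
        sum_le_sum fun l _ ↦ sum_le_sum fun l' _ ↦ hpair l l'
    _ = _ := by
        simp only [sum_add_distrib, sum_ite_eq, mem_univ, if_true, sum_const, card_univ,
          nsmul_eq_mul]
        ring

lemma expect_pairSum_sub_sq_le (hι : 4 ≤ Fintype.card ι) (hF₀ : ∀ p, 0 ≤ F p)
    (hF : ∀ p, F p ≤ 1 / 2) :
    𝔼 σ, (pairSum F e σ - Fintype.card κ * 𝔼 p, F p) ^ 2 ≤ 6 * (Fintype.card κ * 𝔼 p, F p) := by
  have hd : (4 : ℝ) ≤ Fintype.card ι := by exact_mod_cast hι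
  have hκ : (Fintype.card κ * 2 : ℝ) ≤ Fintype.card ι := by
    have := Fintype.card_le_of_embedding e
    rw [Fintype.card_prod, Fintype.card_fin] at this
    exact_mod_cast this
  have hsq := expect_pairSum_sq_le e hι hF₀ fun p ↦ (hF p).trans (by norm_num)
  have hmean := expect_pairSum (F := F) e
  set d : ℝ := (Fintype.card ι : ℝ)
  set μ : ℝ := Fintype.card κ * 𝔼 p, F p with hμ
  have hμ₀ : 0 ≤ μ := mul_nonneg (Nat.cast_nonneg _) (expect_nonneg fun p _ ↦ hF₀ p)
  have hμd : μ ≤ d / 4 := by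
    have hp : 𝔼 p, F p ≤ 1 / 2 := by
      rcases isEmpty_or_nonempty (Fin 2 ↪ ι) with h | h
      · simp
      · exact expect_le univ_nonempty fun p _ ↦ hF p
    calc μ ≤ Fintype.card κ * (1 / 2) := by rw [hμ]; gcongr
      _ ≤ d / 4 := by linarith
  have hexcess : (4 * d - 6) / ((d - 2) * (d - 3)) * μ ≤ 5 := by
    rw [div_mul_eq_mul_div, div_le_iff₀ (by nlinarith)]
    calc (4 * d - 6) * μ ≤ (4 * d - 6) * (d / 4) := by gcongr; linarith
      _ ≤ 5 * ((d - 2) * (d - 3)) := by nlinarith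
  calc 𝔼 σ, (pairSum F e σ - μ) ^ 2 = 𝔼 σ, pairSum F e σ ^ 2 - μ ^ 2 := by
        simp only [sub_sq, expect_add_distrib, expect_sub_distrib, ← mul_expect, ← expect_mul,
          hmean, Fintype.expect_const]
        ring
    _ ≤ μ + (4 * d - 6) / ((d - 2) * (d - 3)) * μ * μ := by linarith
    _ ≤ 6 * μ := by linarith [mul_le_mul_of_nonneg_right hexcess hμ₀]

lemma sq_mul_expect_inv_one_add_le {Ω : Type*} [Fintype Ω] [Nonempty Ω] {X : Ω → ℝ} {μ : ℝ}
    (hX : ∀ ω, 0 ≤ X ω) (hμ : 𝔼 ω, X ω = μ) :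
    (1 + μ) ^ 2 * 𝔼 ω, (1 + X ω)⁻¹ ≤ (1 + μ) + 𝔼 ω, (X ω - μ) ^ 2 := by
  have hpoint (ω : Ω) : (1 + μ) ^ 2 * (1 + X ω)⁻¹ ≤ (1 + μ) - (X ω - μ) + (X ω - μ) ^ 2 := by
    rw [← div_eq_mul_inv, div_le_iff₀ (by linarith [hX ω])]
    linarith [mul_nonneg (hX ω) (sq_nonneg (X ω - μ))]
  calc (1 + μ) ^ 2 * 𝔼 ω, (1 + X ω)⁻¹ ≤ 𝔼 ω, ((1 + μ) - (X ω - μ) + (X ω - μ) ^ 2) := by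
        rw [mul_expect]
        exact expect_le_expect fun ω _ ↦ hpoint ω
    _ = _ := by
        simp only [expect_add_distrib, expect_sub_distrib, Fintype.expect_const, hμ]
        ring

lemma expect_inv_one_add_pairSum_mul_le (hι : 4 ≤ Fintype.card ι) (hF₀ : ∀ p, 0 ≤ F p)
    (hF : ∀ p, F p ≤ 1 / 2) :
    (𝔼 σ, (1 + pairSum F e σ)⁻¹) * (1 + Fintype.card κ * 𝔼 p, F p) ≤ 7 := by
  have hvar := expect_pairSum_sub_sq_le e hι hF₀ hF
  have hinv := sq_mul_expect_inv_one_add_le (X := pairSum F e)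
    (fun σ ↦ sum_nonneg fun l _ ↦ hF₀ _) (expect_pairSum e)
  have hμ₀ : 0 ≤ Fintype.card κ * 𝔼 p, F p :=
    mul_nonneg (Nat.cast_nonneg _) (expect_nonneg fun p _ ↦ hF₀ p)
  set μ : ℝ := Fintype.card κ * 𝔼 p, F p
  refine le_of_mul_le_mul_left ?_ (by linarith : 0 < 1 + μ)
  linarith

end PairSums

section PermutationDecay

variable {ι κ : Type*} {c : ι → ℝ}

/-- Half the defect from `1` of the squared mean of `c` over a pair of indices. -/
noncomputable def pairDefect (c : ι → ℝ) (p : Fin 2 ↪ ι) : ℝ :=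
  (1 - ((c (p 0) + c (p 1)) / 2) ^ 2) / 2

lemma pairDefect_nonneg (hc : ∀ a, |c a| ≤ 1) (p : Fin 2 ↪ ι) : 0 ≤ pairDefect c p := by
  have h₀ := abs_le.1 (hc (p 0))
  have h₁ := abs_le.1 (hc (p 1))
  have : ((c (p 0) + c (p 1)) / 2) ^ 2 ≤ 1 := by
    rw [sq_le_one_iff_abs_le_one, abs_le]
    constructor <;> linarith
  rw [pairDefect]
  linarith

lemma pairDefect_le_half (c : ι → ℝ) (p : Fin 2 ↪ ι) : pairDefect c p ≤ 1 / 2 := by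
  rw [pairDefect]
  linarith [sq_nonneg ((c (p 0) + c (p 1)) / 2)]

lemma abs_add_div_two_le_one_sub_pairDefect (c : ι → ℝ) (p : Fin 2 ↪ ι) :
    |(c (p 0) + c (p 1)) / 2| ≤ 1 - pairDefect c p := by
  rw [pairDefect, ← sq_abs ((c (p 0) + c (p 1)) / 2)]
  nlinarith [sq_nonneg (|(c (p 0) + c (p 1)) / 2| - 1)]

variable [Fintype ι]

lemma sum_fin_two_embedding (w : ι → ι → ℝ) :
    ∑ p : Fin 2 ↪ ι, w (p 0) (p 1) = (∑ a, ∑ b, w a b) - ∑ a, w a a := by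
  classical
  have hoff : ∑ p : Fin 2 ↪ ι, w (p 0) (p 1) = ∑ z ∈ univ.offDiag, w z.1 z.2 :=
    sum_bij' (fun p _ ↦ (p 0, p 1))
      (fun z hz ↦ Function.Embedding.embFinTwo (mem_offDiag.1 hz).2.2)
      (fun p _ ↦ by simp) (fun _ _ ↦ mem_univ _)
      (fun p _ ↦ Function.Embedding.twoEmbeddingEquiv.left_inv p) (fun _ _ ↦ rfl) (fun _ _ ↦ rfl)
  have hsplit := sum_union (disjoint_diag_offDiag (univ : Finset ι)) (f := fun z ↦ w z.1 z.2)
  rw [diag_union_offDiag, sum_product, sum_diag] at hsplit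
  rw [hoff, hsplit, add_sub_cancel_left]

lemma one_sub_sq_expect_le (hι : 4 ≤ Fintype.card ι) (hc : ∀ a, |c a| ≤ 1) :
    1 - (𝔼 a, c a) ^ 2 ≤ 4 * 𝔼 p, pairDefect c p := by
  have hd : (4 : ℝ) ≤ Fintype.card ι := by exact_mod_cast hι
  have hcard : (Fintype.card (Fin 2 ↪ ι) : ℝ) = Fintype.card ι * (Fintype.card ι - 1) := by
    rw [Fintype.card_embedding_eq, Fintype.card_fin]
    simp only [Nat.descFactorial, tsub_zero, mul_one, Nat.cast_mul, mul_comm,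
      Nat.cast_sub (show 1 ≤ Fintype.card ι by omega), Nat.cast_one]
  set d : ℝ := (Fintype.card ι : ℝ)
  have hsq : ∑ a, c a ^ 2 ≤ d := by
    simpa [d] using sum_le_sum fun a (_ : a ∈ univ) ↦ (sq_le_one_iff_abs_le_one (c a)).2 (hc a)
  have hκ : (𝔼 a, c a) ^ 2 ≤ 1 := by
    have : Nonempty ι := Fintype.card_pos_iff.1 (by omega)
    exact (sq_le_one_iff_abs_le_one _).2 <|
      (abs_expect_le _ _).trans (expect_le univ_nonempty fun a _ ↦ hc a)
  have hmean : ∑ a, c a = d * 𝔼 a, c a := (Fintype.card_mul_expect c).symm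
  have hsum : ∑ p, pairDefect c p
      = d * (d - 1) / 2 - (d - 2) / 4 * ∑ a, c a ^ 2 - (d * 𝔼 a, c a) ^ 2 / 4 := by
    have hexpand (a b : ι) : (1 - ((c a + c b) / 2) ^ 2) / 2
        = 1 / 2 - c a ^ 2 / 8 - c b ^ 2 / 8 - c a * c b / 4 := by ring
    refine (sum_fin_two_embedding fun a b ↦ (1 - ((c a + c b) / 2) ^ 2) / 2).trans ?_
    simp only [hexpand, sum_sub_distrib, ← sum_div, ← mul_sum, ← sum_mul, sum_const, card_univ,
      nsmul_eq_mul, ← hmean, ← sq]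
    ring
  rw [Fintype.expect_eq_sum_div_card (pairDefect c), hcard, hsum, mul_div_assoc',
    le_div_iff₀ (by nlinarith)]
  nlinarith [mul_nonneg (sub_nonneg.2 hsq) (by linarith : 0 ≤ d - 2)]

lemma prod_one_sub_mul_one_add_sum_le {T : Finset κ} {w : κ → ℝ} (h₀ : ∀ l, 0 ≤ w l)
    (h₁ : ∀ l, w l ≤ 1) : (∏ l ∈ T, (1 - w l)) * (1 + ∑ l ∈ T, w l) ≤ 1 := by
  classical
  induction T using Finset.induction_on with
  | empty => simp
  | insert a T ha ih =>
    have hS : 0 ≤ ∑ l ∈ T, w l := sum_nonneg fun l _ ↦ h₀ l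
    rw [prod_insert ha, sum_insert ha]
    calc _ = (∏ l ∈ T, (1 - w l)) * ((1 - w a) * (1 + (w a + ∑ l ∈ T, w l))) := by ring
      _ ≤ (∏ l ∈ T, (1 - w l)) * (1 + ∑ l ∈ T, w l) := by
        gcongr
        · exact prod_nonneg fun l _ ↦ sub_nonneg.2 (h₁ l)
        · nlinarith [h₀ a, mul_nonneg (h₀ a) hS]
      _ ≤ 1 := ih

variable [DecidableEq ι] [Fintype κ]

lemma abs_expect_perm_prod_le {g : ι → ι → ℝ} (hg : ∀ a b, |g a b| ≤ 1) (hc : ∀ a, |c a| ≤ 1)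
    (e : κ × Fin 2 ↪ ι) (hg₀ : ∀ l, g (e (l, 0)) = 1) (hg₁ : ∀ l, g (e (l, 1)) = c) :
    |𝔼 σ : Equiv.Perm ι, ∏ a, g a (σ a)| ≤ 𝔼 σ, (1 + pairSum (pairDefect c) e σ)⁻¹ := by
  classical
  set S : Finset ι := univ.map e
  set R : Equiv.Perm ι → ℝ := fun σ ↦ ∏ a ∈ Sᶜ, g a (σ a)
  have hsplit (σ : Equiv.Perm ι) : ∏ a, g a (σ a) = R σ * ∏ l, c (σ (e (l, 1))) := by
    rw [← prod_compl_mul_prod S, prod_map, Fintype.prod_prod_type]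
    simp only [Fin.prod_univ_two, hg₀, hg₁, Pi.one_apply, one_mul, R]
  have hR (l : κ) (σ : Equiv.Perm ι) : R (σ * Equiv.swap (e (l, 0)) (e (l, 1))) = R σ :=
    prod_congr rfl fun a ha ↦ by
      have hne (j : Fin 2) : a ≠ e (l, j) := by
        rintro rfl
        simp [S] at ha
      rw [Equiv.Perm.mul_apply, Equiv.swap_apply_of_ne_of_ne (hne 0) (hne 1)]
  have hR₁ (σ : Equiv.Perm ι) : |R σ| ≤ 1 := by
    rw [abs_prod]
    exact prod_le_one (fun _ _ ↦ abs_nonneg _) fun _ _ ↦ hg _ _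
  have hdefect (σ : Equiv.Perm ι) : |∏ l, (c (σ (e (l, 0))) + c (σ (e (l, 1)))) / 2|
      ≤ (1 + pairSum (pairDefect c) e σ)⁻¹ := by
    have hS₀ : 0 ≤ pairSum (pairDefect c) e σ := sum_nonneg fun l _ ↦ pairDefect_nonneg hc _
    calc _ ≤ ∏ l, (1 - pairDefect c ((pairAt e l).trans σ.toEmbedding)) := by
          rw [abs_prod]
          exact prod_le_prod (fun _ _ ↦ abs_nonneg _) fun l _ ↦
            abs_add_div_two_le_one_sub_pairDefect c ((pairAt e l).trans σ.toEmbedding)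
      _ ≤ _ := by
          rw [← one_div, le_div_iff₀ (by linarith)]
          exact prod_one_sub_mul_one_add_sum_le (fun l ↦ pairDefect_nonneg hc _)
            fun l ↦ (pairDefect_le_half c _).trans (by norm_num)
  calc |𝔼 σ : Equiv.Perm ι, ∏ a, g a (σ a)|
      = |𝔼 σ, R σ * ∏ l, (c (σ (e (l, 0))) + c (σ (e (l, 1)))) / 2| := by
        rw [← expect_perm_mul_prod_eq_of_swap_invariant e c univ fun l _ ↦ hR l]
        simp only [hsplit]
    _ ≤ 𝔼 σ, |R σ * ∏ l, (c (σ (e (l, 0))) + c (σ (e (l, 1)))) / 2| := abs_expect_le _ _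
    _ ≤ _ := expect_le_expect fun σ _ ↦ by
        rw [abs_mul]
        exact (mul_le_of_le_one_left (abs_nonneg _) (hR₁ σ)).trans (hdefect σ)

lemma abs_expect_perm_prod_mul_le (hι : 4 ≤ Fintype.card ι) {g : ι → ι → ℝ}
    (hg : ∀ a b, |g a b| ≤ 1) (hc : ∀ a, |c a| ≤ 1) (e : κ × Fin 2 ↪ ι)
    (hg₀ : ∀ l, g (e (l, 0)) = 1) (hg₁ : ∀ l, g (e (l, 1)) = c) :
    |𝔼 σ : Equiv.Perm ι, ∏ a, g a (σ a)| * ((Fintype.card κ + 1) * (1 - (𝔼 a, c a) ^ 2)) ≤ 28 := by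
  have hD := one_sub_sq_expect_le hι hc
  have hD₀ : 0 ≤ 𝔼 p, pairDefect c p := expect_nonneg fun p _ ↦ pairDefect_nonneg hc p
  set D := 𝔼 p, pairDefect c p
  have hdefect : (Fintype.card κ + 1 : ℝ) * (1 - (𝔼 a, c a) ^ 2)
      ≤ 4 * (1 + Fintype.card κ * D) := by
    linarith [sq_nonneg (𝔼 a, c a),
      mul_le_mul_of_nonneg_left hD (Nat.cast_nonneg (α := ℝ) (Fintype.card κ))]
  calc _ ≤ |𝔼 σ : Equiv.Perm ι, ∏ a, g a (σ a)| * (4 * (1 + Fintype.card κ * D)) := by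
        gcongr
    _ ≤ (𝔼 σ, (1 + pairSum (pairDefect c) e σ)⁻¹) * (4 * (1 + Fintype.card κ * D)) := by
        gcongr
        exact abs_expect_perm_prod_le hg hc e hg₀ hg₁
    _ ≤ 28 := by
        linarith [expect_inv_one_add_pairSum_mul_le e hι (pairDefect_nonneg hc)
          (pairDefect_le_half c)]

end PermutationDecay

section CosineEstimates

lemma abs_sin_nat_mul_le (k : ℕ) (y : ℝ) : |Real.sin (k * y)| ≤ k * |Real.sin y| := by
  induction k with
  | zero => simp
  | succ k ih =>
    calc |Real.sin ((k + 1 : ℕ) * y)|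
        = |Real.sin (k * y) * Real.cos y + Real.cos (k * y) * Real.sin y| := by
          rw [Nat.cast_succ, add_one_mul, Real.sin_add]
      _ ≤ |Real.sin (k * y)| * |Real.cos y| + |Real.cos (k * y)| * |Real.sin y| := by
          simpa only [abs_mul] using
            abs_add_le (Real.sin (k * y) * Real.cos y) (Real.cos (k * y) * Real.sin y)
      _ ≤ |Real.sin (k * y)| * 1 + 1 * |Real.sin y| := by
          gcongr <;> exact Real.abs_cos_le_one _
      _ ≤ (k + 1 : ℕ) * |Real.sin y| := by
          push_cast
          linarith

lemma one_sub_cos_int_mul_le (k : ℤ) (y : ℝ) :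
    1 - Real.cos (k * y) ≤ (k : ℝ) ^ 2 * (1 - Real.cos y) := by
  have hhalf (z : ℝ) : 1 - Real.cos z = 2 * Real.sin (z / 2) ^ 2 := by
    rw [Real.sin_sq_eq_half_sub, mul_div_cancel₀ z two_ne_zero]
    ring
  have habs : |Real.sin (k.natAbs * (y / 2))| = |Real.sin (k * y / 2)| := by
    rw [Nat.cast_natAbs, Int.cast_abs, mul_div_assoc]
    rcases abs_choice (k : ℝ) with h | h
    · rw [h]
    · rw [h, neg_mul, Real.sin_neg, abs_neg]
  have hsin := pow_le_pow_left₀ (abs_nonneg _) (abs_sin_nat_mul_le k.natAbs (y / 2)) 2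
  rw [habs, mul_pow, sq_abs, sq_abs, Nat.cast_natAbs, Int.cast_abs, sq_abs] at hsin
  rw [hhalf, hhalf]
  linarith

lemma abs_one_sub_prod_le {ι : Type*} (T : Finset ι) {c : ι → ℝ} (hc : ∀ i, |c i| ≤ 1) :
    |1 - ∏ i ∈ T, c i| ≤ ∑ i ∈ T, (1 - c i) := by
  classical
  induction T using Finset.induction_on with
  | empty => simp
  | insert a T ha ih =>
    calc |1 - ∏ i ∈ insert a T, c i| = |(1 - c a) + c a * (1 - ∏ i ∈ T, c i)| := by
          rw [prod_insert ha]
          ring_nf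
      _ ≤ |1 - c a| + |c a| * |1 - ∏ i ∈ T, c i| := by
          simpa only [abs_mul] using abs_add_le (1 - c a) (c a * (1 - ∏ i ∈ T, c i))
      _ ≤ (1 - c a) + 1 * ∑ i ∈ T, (1 - c i) := by
          rw [abs_of_nonneg (sub_nonneg.2 (abs_le.1 (hc a)).2)]
          gcongr
          exact hc a
      _ = ∑ i ∈ insert a T, (1 - c i) := by rw [sum_insert ha, one_mul]

end CosineEstimates

section Symbol

variable {ι : Type*} [Fintype ι] [DecidableEq ι] {q N : ℝ}

/-- The Fourier multiplier of the averaging operator over the ball `energyBall q ∅ N`; sines do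
not occur because of the reflection symmetries of the ball. -/
noncomputable def ballSymbol (q N : ℝ) (θ : ι → ℝ) : ℝ :=
  𝔼 x ∈ energyBall q ∅ N, ∏ i, Real.cos (x i * θ i)

/-- The Fourier multiplier of the simple random walk on `ι → ℤ`. All multiplier estimates are in
terms of this one parameter. -/
noncomputable def meanCos {ι : Type*} [Fintype ι] (θ : ι → ℝ) : ℝ := 𝔼 i, Real.cos (θ i)

lemma energyBall_nonempty (hq : 1 ≤ q) (hN : 0 ≤ N) : (energyBall (ι := ι) q ∅ N).Nonempty :=
  card_pos.1 (by exact_mod_cast card_energyBall_pos hq hN)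

omit [DecidableEq ι] in
lemma abs_prod_cos_le_one (x : ι → ℤ) (θ : ι → ℝ) : |∏ i, Real.cos (x i * θ i)| ≤ 1 := by
  rw [abs_prod]
  exact prod_le_one (fun _ _ ↦ abs_nonneg _) fun _ _ ↦ Real.abs_cos_le_one _

omit [DecidableEq ι] in
lemma abs_meanCos_le_one (θ : ι → ℝ) : |meanCos θ| ≤ 1 := by
  rcases isEmpty_or_nonempty ι with h | h
  · simp [meanCos]
  · exact (abs_expect_le _ _).trans (expect_le univ_nonempty fun i _ ↦ Real.abs_cos_le_one _)

lemma abs_ballSymbol_le_one (hq : 1 ≤ q) (hN : 0 ≤ N) (θ : ι → ℝ) : |ballSymbol q N θ| ≤ 1 :=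
  (abs_expect_le _ _).trans <|
    expect_le (energyBall_nonempty hq hN) fun x _ ↦ abs_prod_cos_le_one x θ

lemma expect_abs_one_sub_prod_cos_le (hq : 1 ≤ q) (hN₀ : 0 ≤ N) (hN : 4 * N ≤ Fintype.card ι)
    (θ : ι → ℝ) : 𝔼 x ∈ energyBall q ∅ N, |1 - ∏ i, Real.cos (x i * θ i)|
      ≤ 16 * N * (1 - meanCos θ) := by
  set B := energyBall (ι := ι) q ∅ N
  have hmoment (i : ι) : 𝔼 x ∈ B, (x i : ℝ) ^ 2 ≤ 16 * N / Fintype.card ι := by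
    have hι : (0 : ℝ) < Fintype.card ι := Nat.cast_pos.2 (Fintype.card_pos_iff.2 ⟨i⟩)
    rw [expect_eq_sum_div_card, div_le_div_iff₀ (card_energyBall_pos hq hN₀) hι, mul_comm]
    exact card_mul_sum_sq_le hq hN₀ hN i
  calc 𝔼 x ∈ B, |1 - ∏ i, Real.cos (x i * θ i)|
      ≤ 𝔼 x ∈ B, ∑ i, (x i : ℝ) ^ 2 * (1 - Real.cos (θ i)) := expect_le_expect fun x _ ↦
        (abs_one_sub_prod_le univ fun i ↦ Real.abs_cos_le_one _).trans
          (sum_le_sum fun i _ ↦ one_sub_cos_int_mul_le _ _)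
    _ = ∑ i, (𝔼 x ∈ B, (x i : ℝ) ^ 2) * (1 - Real.cos (θ i)) := by
        simp only [expect_sum_comm, expect_mul]
    _ ≤ ∑ i, 16 * N / Fintype.card ι * (1 - Real.cos (θ i)) := sum_le_sum fun i _ ↦
        mul_le_mul_of_nonneg_right (hmoment i) (sub_nonneg.2 (Real.cos_le_one _))
    _ = 16 * N * 𝔼 i, (1 - Real.cos (θ i)) := by
        rw [← mul_sum, Fintype.expect_eq_sum_div_card]
        ring
    _ ≤ 16 * N * (1 - meanCos θ) := by
        rw [expect_sub_distrib]
        gcongr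
        · rcases isEmpty_or_nonempty ι with h | h <;> simp
        · rfl

lemma abs_one_sub_ballSymbol_le (hq : 1 ≤ q) (hN₀ : 0 ≤ N) (hN : 4 * N ≤ Fintype.card ι)
    (θ : ι → ℝ) : |1 - ballSymbol q N θ| ≤ 16 * N * (1 - meanCos θ) := by
  have hone : (1 : ℝ) = 𝔼 _x ∈ energyBall (ι := ι) q ∅ N, 1 :=
    (expect_const (energyBall_nonempty hq hN₀) 1).symm
  calc |1 - ballSymbol q N θ|
      = |𝔼 x ∈ energyBall q ∅ N, (1 - ∏ i, Real.cos (x i * θ i))| := by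
        rw [expect_sub_distrib, ← hone, ballSymbol]
    _ ≤ 16 * N * (1 - meanCos θ) :=
        (abs_expect_le _ _).trans (expect_abs_one_sub_prod_cos_le hq hN₀ hN θ)

omit [DecidableEq ι] in
lemma meanCos_sub_pi (θ : ι → ℝ) : meanCos (fun i ↦ θ i - Real.pi) = -meanCos θ := by
  simp only [meanCos, Real.cos_sub_pi, expect_neg_distrib]

lemma abs_ballSymbol_pi_sub_ballSymbol_le (hq : 1 ≤ q) (hN₀ : 0 ≤ N) (hN : 4 * N ≤ Fintype.card ι)
    (θ : ι → ℝ) :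
    |ballSymbol q N (fun _ : ι ↦ Real.pi) - ballSymbol q N θ| ≤ 16 * N * (1 + meanCos θ) := by
  have hcos (k : ℤ) (y : ℝ) :
      Real.cos (k * y) = Real.cos (k * Real.pi) * Real.cos (k * (y - Real.pi)) := by
    rw [← sub_add_cancel (k * y : ℝ) (k * Real.pi), Real.cos_add, Real.sin_int_mul_pi]
    ring_nf
  have hprod (x : ι → ℤ) :
      ∏ i, Real.cos (x i * Real.pi) - ∏ i, Real.cos (x i * θ i)
        = (∏ i, Real.cos (x i * Real.pi)) * (1 - ∏ i, Real.cos (x i * (θ i - Real.pi))) := by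
    rw [mul_sub, mul_one, ← prod_mul_distrib, prod_congr rfl fun i _ ↦ hcos (x i) (θ i)]
  calc |ballSymbol q N (fun _ ↦ Real.pi) - ballSymbol q N θ|
      ≤ 𝔼 x ∈ energyBall q ∅ N, |1 - ∏ i, Real.cos (x i * (θ i - Real.pi))| := by
        rw [ballSymbol, ballSymbol, ← expect_sub_distrib]
        refine (abs_expect_le _ _).trans (expect_le_expect fun x _ ↦ ?_)
        rw [hprod, abs_mul]
        exact mul_le_of_le_one_left (abs_nonneg _) (abs_prod_cos_le_one x _)
    _ ≤ 16 * N * (1 - meanCos fun i ↦ θ i - Real.pi) := expect_abs_one_sub_prod_cos_le hq hN₀ hN _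
    _ = 16 * N * (1 + meanCos θ) := by rw [meanCos_sub_pi, sub_neg_eq_add]

omit [DecidableEq ι] in
lemma energy_comp_perm (x : ι → ℤ) (σ : Equiv.Perm ι) : energy q (x ∘ σ) = energy q x :=
  Equiv.sum_comp σ fun i ↦ |(x i : ℝ)| ^ q

lemma ballSymbol_comp_perm (hq : 1 ≤ q) (θ : ι → ℝ) (σ : Equiv.Perm ι) :
    ballSymbol q N (θ ∘ σ) = ballSymbol q N θ := by
  have hmem (τ : Equiv.Perm ι) (x : ι → ℤ) (hx : x ∈ energyBall q ∅ N) :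
      x ∘ τ ∈ energyBall q ∅ N := by
    rw [mem_energyBall hq] at hx ⊢
    exact ⟨by simp, (energy_comp_perm x τ).trans_le hx.2⟩
  refine expect_nbij' (fun x ↦ x ∘ σ.symm) (fun x ↦ x ∘ σ) (hmem _) (hmem _)
    (fun x _ ↦ by ext; simp) (fun x _ ↦ by ext; simp) fun x _ ↦ ?_
  rw [← Equiv.prod_comp σ fun i ↦ Real.cos ((x ∘ σ.symm) i * θ i)]
  simp

omit [DecidableEq ι] in
lemma exists_pairing_zero_unit (x : ι → ℤ) (hx : unitCount x ≤ #{i | x i = 0}) :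
    ∃ e : Fin (unitCount x) × Fin 2 ↪ ι, ∀ l, x (e (l, 0)) = 0 ∧ |x (e (l, 1))| = 1 := by
  obtain ⟨Z, hZ, hZcard⟩ := exists_subset_card_eq hx
  let z := Z.equivFinOfCardEq hZcard
  let u : {i // i ∈ univ.filter (|x ·| = 1)} ≃ Fin (unitCount x) := equivFinOfCardEq rfl
  have hz (l) : x (z.symm l) = 0 := (mem_filter.1 (hZ (z.symm l).2)).2
  have hu (l) : |x (u.symm l)| = 1 := (mem_filter.1 (u.symm l).2).2
  have hne (l l') : (z.symm l : ι) ≠ u.symm l' := fun h ↦ by simpa [← h, hz] using hu l'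
  have hz_inj (l l') (h : (z.symm l : ι) = z.symm l') : l = l' :=
    z.symm.injective (Subtype.ext h)
  have hu_inj (l l') (h : (u.symm l : ι) = u.symm l') : l = l' :=
    u.symm.injective (Subtype.ext h)
  refine ⟨⟨fun p ↦ if p.2 = 0 then z.symm p.1 else u.symm p.1, ?_⟩, fun l ↦ ⟨hz l, hu l⟩⟩
  rintro ⟨l, j⟩ ⟨l', j'⟩ h
  fin_cases j <;> fin_cases j'
  · exact Prod.ext (hz_inj l l' h) rfl
  · exact (hne l l' h).elim
  · exact (hne l' l h.symm).elim
  · exact Prod.ext (hu_inj l l' h) rfl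

lemma abs_expect_perm_prod_cos_mul_le (hq : 1 ≤ q) (hN₁ : 1 ≤ N) (hN : 4 * N ≤ Fintype.card ι)
    (θ : ι → ℝ) {x : ι → ℤ} (hx : x ∈ energyBall q ∅ N) :
    |𝔼 σ : Equiv.Perm ι, ∏ a, Real.cos (x a * θ (σ a))| * (1 - meanCos θ ^ 2)
      ≤ 28 * ((unitCount x : ℝ) + 1)⁻¹ := by
  have hι : 4 ≤ Fintype.card ι := by exact_mod_cast (by linarith : (4 : ℝ) ≤ Fintype.card ι)
  have hE := ((mem_energyBall hq).1 hx).2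
  have hcount : unitCount x ≤ #{i | x i = 0} := by
    have hsplit : (#{i | x i = 0} : ℝ) + #{i | x i ≠ 0} = Fintype.card ι := by
      exact_mod_cast card_filter_add_card_filter_not (s := univ) fun i ↦ x i = 0
    have : (unitCount x : ℝ) ≤ #{i | x i = 0} := by
      linarith [unitCount_le_energy hq x, card_ne_zero_le_energy hq x]
    exact_mod_cast this
  obtain ⟨e, he⟩ := exists_pairing_zero_unit x hcount
  have hdecay := abs_expect_perm_prod_mul_le hι (g := fun a b ↦ Real.cos (x a * θ b))
    (c := fun b ↦ Real.cos (θ b)) (fun _ _ ↦ Real.abs_cos_le_one _)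
    (fun _ ↦ Real.abs_cos_le_one _) e (fun l ↦ by ext; simp [(he l).1]) fun l ↦ by
      rcases (abs_eq zero_le_one).1 (he l).2 with h | h <;> simp [h]
  rw [Fintype.card_fin] at hdecay
  rw [← div_eq_mul_inv, le_div_iff₀ (by positivity)]
  exact (by rw [meanCos]; ring : _ = _).trans_le hdecay

lemma abs_ballSymbol_mul_le (hq : 1 ≤ q) (hN₁ : 1 ≤ N) (hN : 4 * N ≤ Fintype.card ι)
    (θ : ι → ℝ) : |ballSymbol q N θ| * (N * (1 - meanCos θ ^ 2)) ≤ 4088 := by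
  have : Nonempty ι := Fintype.card_pos_iff.1 (by
    exact_mod_cast (by linarith : (0 : ℝ) < Fintype.card ι))
  have hpos := card_energyBall_pos (ι := ι) hq (zero_le_one.trans hN₁)
  set B := energyBall (ι := ι) q ∅ N
  have hsymm : ballSymbol q N θ
      = 𝔼 x ∈ B, 𝔼 σ : Equiv.Perm ι, ∏ a, Real.cos (x a * θ (σ a)) := by
    rw [expect_comm, ← Fintype.expect_const (ι := Equiv.Perm ι) (ballSymbol q N θ)]
    exact expect_congr rfl fun σ _ ↦ (ballSymbol_comp_perm hq θ σ).symm
  have hκ : 0 ≤ 1 - meanCos θ ^ 2 :=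
    sub_nonneg.2 ((sq_le_one_iff_abs_le_one _).2 (abs_meanCos_le_one θ))
  calc |ballSymbol q N θ| * (N * (1 - meanCos θ ^ 2))
      ≤ (𝔼 x ∈ B, |𝔼 σ : Equiv.Perm ι, ∏ a, Real.cos (x a * θ (σ a))|)
          * (N * (1 - meanCos θ ^ 2)) := by
        rw [hsymm]
        gcongr
        exact abs_expect_le _ _
    _ = N * 𝔼 x ∈ B, (|𝔼 σ : Equiv.Perm ι, ∏ a, Real.cos (x a * θ (σ a))|
          * (1 - meanCos θ ^ 2)) := by
        rw [← expect_mul]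
        ring
    _ ≤ N * 𝔼 x ∈ B, 28 * ((unitCount x : ℝ) + 1)⁻¹ := by
        refine mul_le_mul_of_nonneg_left (expect_le_expect fun x hx ↦ ?_) (by linarith)
        exact abs_expect_perm_prod_cos_mul_le hq hN₁ hN θ hx
    _ = 28 * (N * ∑ x ∈ B, ((unitCount x : ℝ) + 1)⁻¹) / #B := by
        rw [← mul_expect, expect_eq_sum_div_card]
        ring
    _ ≤ 4088 := by
        rw [div_le_iff₀ hpos]
        linarith [mul_sum_inv_unitCount_le (ι := ι) hq hN]

lemma expect_units_prod_exp (x : ι → ℤ) (θ : ι → ℝ) :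
    𝔼 ε : ι → ℤˣ, ∏ i, Complex.exp ((ε i * x i : ℤ) * θ i * Complex.I)
      = ∏ i, Complex.cos (x i * θ i) := by
  have hsum (i : ι) : ∑ e : ℤˣ, Complex.exp ((e * x i : ℤ) * θ i * Complex.I)
      = 2 * Complex.cos (x i * θ i) := by
    rw [show (univ : Finset ℤˣ) = {1, -1} from rfl, sum_pair (by decide), Complex.two_cos]
    simp
  rw [Fintype.expect_eq_sum_div_card, ← Fintype.piFinset_univ,
    ← prod_univ_sum _ fun i (e : ℤˣ) ↦ Complex.exp ((e * x i : ℤ) * θ i * Complex.I)]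
  simp only [hsum, prod_mul_distrib, prod_const, card_univ, Fintype.card_pi, Fintype.card_units_int]
  push_cast
  exact mul_div_cancel_left₀ _ (pow_ne_zero _ two_ne_zero)

lemma units_mul_mem_energyBall (hq : 1 ≤ q) (ε : ι → ℤˣ) {x : ι → ℤ}
    (hx : x ∈ energyBall q ∅ N) : (fun i ↦ ε i * x i) ∈ energyBall q ∅ N := by
  rw [mem_energyBall hq] at hx ⊢
  refine ⟨by simp, le_of_eq_of_le (sum_congr rfl fun i _ ↦ ?_) hx.2⟩
  rcases Int.units_eq_one_or (ε i) with h | h <;> simp [h]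

lemma expect_prod_exp_eq_ballSymbol (hq : 1 ≤ q) (θ : ι → ℝ) :
    𝔼 x ∈ energyBall q ∅ N, ∏ i, Complex.exp (x i * θ i * Complex.I)
      = (ballSymbol q N θ : ℂ) := by
  have hflip (ε : ι → ℤˣ) (x : ι → ℤ) : (fun i ↦ (ε i : ℤ) * (ε i * x i)) = x := by
    ext i
    rw [← mul_assoc, ← Units.val_mul, Int.units_mul_self, Units.val_one, one_mul]
  have hsymm (ε : ι → ℤˣ) :
      𝔼 x ∈ energyBall q ∅ N, ∏ i, Complex.exp ((ε i * x i : ℤ) * θ i * Complex.I)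
        = 𝔼 x ∈ energyBall q ∅ N, ∏ i, Complex.exp (x i * θ i * Complex.I) :=
    expect_nbij' (fun x i ↦ ε i * x i) (fun x i ↦ ε i * x i)
      (fun _ ↦ units_mul_mem_energyBall hq ε) (fun _ ↦ units_mul_mem_energyBall hq ε)
      (fun x _ ↦ hflip ε x) (fun x _ ↦ hflip ε x) fun _ _ ↦ rfl
  rw [← Fintype.expect_const (ι := ι → ℤˣ) (𝔼 x ∈ energyBall q ∅ N, ∏ i, _),
    ← expect_congr rfl fun ε _ ↦ hsymm ε, expect_comm]
  simp only [expect_units_prod_exp, ballSymbol]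
  push_cast
  rfl

end Symbol

section CesaroMean

variable {A A' : Type*} [Ring A] [Algebra ℝ A] [Ring A'] [Algebra ℝ A']

/-- The ergodic mean `(1 + a + ⋯ + a ^ (N - 1)) / N`. It is used for convolution kernels, for the
operators they define, and for their Fourier multipliers. -/
noncomputable def cesaroMean (a : A) (N : ℕ) : A := (N : ℝ)⁻¹ • ∑ j ∈ range N, a ^ j

lemma map_cesaroMean (φ : A →ₐ[ℝ] A') (a : A) (N : ℕ) :
    φ (cesaroMean a N) = cesaroMean (φ a) N := by
  simp [cesaroMean]

lemma two_smul_cesaroMean_sub_mul (a : A) {M N : ℕ} (hM : M ≠ 0) (hMN : M ≤ N) :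
    (2 : ℝ) • cesaroMean a (2 * N) - cesaroMean a N * cesaroMean a M
      = ((N : ℝ)⁻¹ * (M : ℝ)⁻¹) • ∑ i ∈ range M, ∑ l ∈ range (2 * N) \ Ico i (i + N), a ^ l := by
  have hN : (N : ℝ) ≠ 0 := by
    exact_mod_cast (hMN.trans_lt' (Nat.pos_of_ne_zero hM)).ne'
  have hdiff (i : ℕ) (hi : i ∈ range M) : ∑ l ∈ range (2 * N) \ Ico i (i + N), a ^ l
      = (∑ l ∈ range (2 * N), a ^ l) - (∑ j ∈ range N, a ^ j) * a ^ i := by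
    have hsub : Ico i (i + N) ⊆ range (2 * N) := fun l hl ↦ by
      rw [mem_range] at hi ⊢
      rw [mem_Ico] at hl
      omega
    rw [← sum_sdiff hsub, sum_Ico_eq_sum_range, sum_mul]
    simp [add_comm i, pow_add]
  rw [sum_congr rfl hdiff, sum_sub_distrib, ← mul_sum, smul_sub, sum_const, card_range,
    ← Nat.cast_smul_eq_nsmul ℝ, smul_smul, cesaroMean, cesaroMean, cesaroMean, smul_smul,
    smul_mul_smul_comm]
  congr 2
  push_cast
  field_simp

end CesaroMean

section MaximalInequality

variable {V κ : Type*} [AddCommGroup V] [Module ℝ V] {B : LinearMap.BilinForm ℝ V}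
  {K : PointedCone ℝ V} {T : Module.End ℝ V}

/-- `T` is a symmetric positivity-preserving contraction with respect to the inner product `B` and
the cone `K` of nonnegative vectors. -/
structure IsSymmSubMarkov (B : LinearMap.BilinForm ℝ V) (K : PointedCone ℝ V)
    (T : Module.End ℝ V) : Prop where
  isPosSemidef : B.IsPosSemidef
  apply_nonneg : ∀ f ∈ K, ∀ g ∈ K, 0 ≤ B f g
  map_mem : ∀ f ∈ K, T f ∈ K
  apply_symm : ∀ f g, B (T f) g = B f (T g)
  apply_map_self_le : ∀ f, B (T f) (T f) ≤ B f f

lemma two_mul_apply_le (hB : B.IsPosSemidef) (f g : V) : 2 * B f g ≤ B f f + B g g := by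
  have h := hB.nonneg (f - g)
  simp only [map_sub, LinearMap.sub_apply, hB.isSymm.eq g f] at h
  linarith

lemma apply_sum_sum_le (hB : B.IsPosSemidef) (s : Finset κ) (u : κ → V) :
    B (∑ i ∈ s, u i) (∑ i ∈ s, u i) ≤ #s * ∑ i ∈ s, B (u i) (u i) := by
  calc B (∑ i ∈ s, u i) (∑ i ∈ s, u i) = ∑ i ∈ s, ∑ j ∈ s, B (u j) (u i) := by
        simp only [map_sum, LinearMap.sum_apply]
    _ ≤ ∑ i ∈ s, ∑ j ∈ s, (B (u j) (u j) + B (u i) (u i)) / 2 :=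
        sum_le_sum fun i _ ↦ sum_le_sum fun j _ ↦ by linarith [two_mul_apply_le hB (u j) (u i)]
    _ = #s * ∑ i ∈ s, B (u i) (u i) := by
        simp only [← sum_div, sum_add_distrib, sum_const, nsmul_eq_mul, ← mul_sum]
        ring

lemma le_of_sq_le_mul_succ {b : ℕ → ℝ} {c : ℝ} (hc : 0 ≤ c)
    (hb : BddAbove (Set.range b)) (h : ∀ j, b j ^ 2 ≤ c * b (j + 1)) (j : ℕ) : b j ≤ c := by
  set s := ⨆ j, b j
  have hs (j) : b j ≤ √(c * s) :=
    Real.le_sqrt_of_sq_le ((h j).trans (mul_le_mul_of_nonneg_left (le_ciSup hb _) hc))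
  have hs' : s ≤ √(c * s) := ciSup_le hs
  refine (le_ciSup hb j).trans (le_of_not_gt fun hcs ↦ ?_)
  have hsq := (Real.le_sqrt' (hc.trans_lt hcs)).1 hs'
  nlinarith

namespace IsSymmSubMarkov

lemma pow_apply_mem (h : IsSymmSubMarkov B K T) {f : V} (hf : f ∈ K) (n : ℕ) : (T ^ n) f ∈ K := by
  induction n with
  | zero => exact hf
  | succ n ih => rw [pow_succ']; exact h.map_mem _ ih

lemma pow_apply_symm (h : IsSymmSubMarkov B K T) (n : ℕ) (f g : V) :
    B ((T ^ n) f) g = B f ((T ^ n) g) := by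
  induction n generalizing f with
  | zero => rfl
  | succ n ih =>
    rw [pow_succ, Module.End.mul_apply, ih, h.apply_symm, ← Module.End.mul_apply, ← pow_succ',
      ← pow_succ]

lemma apply_pow_self_le (h : IsSymmSubMarkov B K T) (n : ℕ) (f : V) :
    B ((T ^ n) f) ((T ^ n) f) ≤ B f f := by
  induction n with
  | zero => rfl
  | succ n ih => rw [pow_succ']; exact (h.apply_map_self_le _).trans ih

lemma cesaroMean_apply_mem (h : IsSymmSubMarkov B K T) {f : V} (hf : f ∈ K) (N : ℕ) :
    cesaroMean T N f ∈ K := by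
  rw [cesaroMean, LinearMap.smul_apply, LinearMap.sum_apply]
  exact K.smul_mem (by positivity) (sum_mem fun n _ ↦ h.pow_apply_mem hf n)

lemma cesaroMean_apply_symm (h : IsSymmSubMarkov B K T) (N : ℕ) (f g : V) :
    B (cesaroMean T N f) g = B f (cesaroMean T N g) := by
  simp only [cesaroMean, LinearMap.smul_apply, LinearMap.sum_apply, map_smul, map_sum,
    h.pow_apply_symm]

lemma apply_cesaroMean_self_le (h : IsSymmSubMarkov B K T) (N : ℕ) (f : V) :
    B (cesaroMean T N f) (cesaroMean T N f) ≤ B f f := by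
  have hsum := (apply_sum_sum_le h.isPosSemidef (range N) fun n ↦ (T ^ n) f).trans
    (mul_le_mul_of_nonneg_left (sum_le_card_nsmul _ _ _ fun n _ ↦ h.apply_pow_self_le n f)
      (Nat.cast_nonneg _))
  rw [card_range, nsmul_eq_mul] at hsum
  simp only [cesaroMean, LinearMap.smul_apply, LinearMap.sum_apply (range N), map_smul,
    smul_eq_mul]
  rcases N.eq_zero_or_pos with rfl | hN
  · simpa using h.isPosSemidef.nonneg f
  · have hN' : (0 : ℝ) < N := Nat.cast_pos.2 hN
    rw [inv_mul_le_iff₀ hN', inv_mul_le_iff₀ hN']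
    exact hsum

lemma apply_cesaroMean_cesaroMean_le (h : IsSymmSubMarkov B K T) {M N : ℕ} (hM : M ≠ 0)
    (hMN : M ≤ N) {f g : V} (hf : f ∈ K) (hg : g ∈ K) :
    B (cesaroMean T M f) (cesaroMean T N g) ≤ 2 * B (cesaroMean T (2 * N) f) g := by
  have hmem : ((2 : ℝ) • cesaroMean T (2 * N) - cesaroMean T N * cesaroMean T M) f ∈ K := by
    rw [two_smul_cesaroMean_sub_mul T hM hMN]
    simp only [LinearMap.smul_apply, LinearMap.sum_apply]
    exact K.smul_mem (by positivity)
      (sum_mem fun i _ ↦ sum_mem fun l _ ↦ h.pow_apply_mem hf l)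
  have := h.apply_nonneg _ hmem g hg
  rw [LinearMap.sub_apply, map_sub, LinearMap.sub_apply, LinearMap.smul_apply, map_smul,
    LinearMap.smul_apply, smul_eq_mul, Module.End.mul_apply, h.cesaroMean_apply_symm N] at this
  linarith

lemma apply_sum_cesaroMean_self_le (h : IsSymmSubMarkov B K T) (s : Finset κ) (ν : κ → ℕ)
    {g : κ → V} (hg : ∀ i, g i ∈ K) :
    B (∑ i ∈ s, cesaroMean T (2 ^ ν i) (g i)) (∑ i ∈ s, cesaroMean T (2 ^ ν i) (g i))
      ≤ 4 * B (∑ i ∈ s, g i) (∑ i ∈ s, cesaroMean T (2 ^ (ν i + 1)) (g i)) := by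
  have hpair (i j : κ) : B (cesaroMean T (2 ^ ν i) (g i)) (cesaroMean T (2 ^ ν j) (g j))
      ≤ 2 * B (g i) (cesaroMean T (2 ^ (ν j + 1)) (g j))
        + 2 * B (g j) (cesaroMean T (2 ^ (ν i + 1)) (g i)) := by
    have hnonneg (i j : κ) : 0 ≤ B (g i) (cesaroMean T (2 ^ (ν j + 1)) (g j)) :=
      h.apply_nonneg _ (hg i) _ (h.cesaroMean_apply_mem (hg j) _)
    have hle {i j : κ} (hij : ν i ≤ ν j) :
        B (cesaroMean T (2 ^ ν i) (g i)) (cesaroMean T (2 ^ ν j) (g j))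
          ≤ 2 * B (g i) (cesaroMean T (2 ^ (ν j + 1)) (g j)) := by
      rw [← h.cesaroMean_apply_symm (2 ^ (ν j + 1)), pow_succ']
      exact h.apply_cesaroMean_cesaroMean_le (by positivity)
        (Nat.pow_le_pow_right two_pos hij) (hg i) (hg j)
    rcases le_total (ν i) (ν j) with hij | hij
    · linarith [hle hij, hnonneg j i]
    · rw [h.isPosSemidef.isSymm.eq]
      linarith [hle hij, hnonneg i j]
  have hcross : ∑ j ∈ s, ∑ i ∈ s, B (g i) (cesaroMean T (2 ^ (ν j + 1)) (g j))
      = B (∑ i ∈ s, g i) (∑ i ∈ s, cesaroMean T (2 ^ (ν i + 1)) (g i)) := by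
    simp only [map_sum, LinearMap.sum_apply]
  calc B (∑ i ∈ s, cesaroMean T (2 ^ ν i) (g i)) (∑ i ∈ s, cesaroMean T (2 ^ ν i) (g i))
      = ∑ j ∈ s, ∑ i ∈ s, B (cesaroMean T (2 ^ ν i) (g i)) (cesaroMean T (2 ^ ν j) (g j)) := by
        simp only [map_sum, LinearMap.sum_apply]
    _ ≤ ∑ j ∈ s, ∑ i ∈ s, (2 * B (g i) (cesaroMean T (2 ^ (ν j + 1)) (g j))
          + 2 * B (g j) (cesaroMean T (2 ^ (ν i + 1)) (g i))) :=
        sum_le_sum fun j _ ↦ sum_le_sum fun i _ ↦ hpair i j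
    _ = 4 * B (∑ i ∈ s, g i) (∑ i ∈ s, cesaroMean T (2 ^ (ν i + 1)) (g i)) := by
        simp only [sum_add_distrib, ← mul_sum]
        rw [sum_comm (f := fun j i ↦ B (g j) _), hcross]
        ring

/- The sums `∑ i, A_{2 ^ (ν i + j)} (g i)`, `j = 0, 1, …`, are bounded uniformly in `j`, and each
is controlled by the geometric mean of `∑ i, g i` and the next; hence all are bounded by the
former. -/
theorem apply_sum_cesaroMean_le (h : IsSymmSubMarkov B K T) (s : Finset κ) (ν : κ → ℕ)
    {g : κ → V} (hg : ∀ i, g i ∈ K) :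
    B (∑ i ∈ s, cesaroMean T (2 ^ ν i) (g i)) (∑ i ∈ s, cesaroMean T (2 ^ ν i) (g i))
      ≤ 16 * B (∑ i ∈ s, g i) (∑ i ∈ s, g i) := by
  set G := ∑ i ∈ s, g i
  let S (j : ℕ) : V := ∑ i ∈ s, cesaroMean T (2 ^ (ν i + j)) (g i)
  have hbdd : BddAbove (Set.range fun j ↦ B (S j) (S j)) := by
    refine ⟨#s * ∑ i ∈ s, B (g i) (g i), Set.forall_mem_range.2 fun j ↦ ?_⟩
    exact (apply_sum_sum_le h.isPosSemidef _ _).trans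
      (mul_le_mul_of_nonneg_left (sum_le_sum fun i _ ↦ h.apply_cesaroMean_self_le _ _)
        (Nat.cast_nonneg _))
  have hstep (j : ℕ) : B (S j) (S j) ^ 2 ≤ 16 * B G G * B (S (j + 1)) (S (j + 1)) :=
    calc B (S j) (S j) ^ 2 ≤ (4 * B G (S (j + 1))) ^ 2 :=
          pow_le_pow_left₀ (h.isPosSemidef.nonneg _)
            (h.apply_sum_cesaroMean_self_le s (ν · + j) hg) 2
      _ = 16 * B G (S (j + 1)) ^ 2 := by ring
      _ ≤ 16 * (B G G * B (S (j + 1)) (S (j + 1))) := by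
          gcongr
          exact LinearMap.BilinForm.apply_sq_le_of_symm B h.isPosSemidef.nonneg
            (LinearMap.BilinForm.isSymm_iff.1 h.isPosSemidef.isSymm) _ _
      _ = 16 * B G G * B (S (j + 1)) (S (j + 1)) := by ring
  exact le_of_sq_le_mul_succ (mul_nonneg (by norm_num) (h.isPosSemidef.nonneg G)) hbdd hstep 0

end IsSymmSubMarkov

end MaximalInequality

section Kernels

variable {G : Type*}

/-- The `ℓ²` inner product of finitely supported functions on `G`. These are encoded as elements of
the group algebra, whose product is convolution. -/
noncomputable def dot : LinearMap.BilinForm ℝ ℝ[G] :=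
  (Finsupp.bilinearCombination ℝ ℝ).compl₁₂
    (Finsupp.lcoeFun ∘ₗ (AddMonoidAlgebra.coeffLinearEquiv ℝ).toLinearMap)
    (AddMonoidAlgebra.coeffLinearEquiv ℝ).toLinearMap

lemma dot_eq_sum (f : ℝ[G]) {g : ℝ[G]} {s : Finset G} (hs : g.coeff.support ⊆ s) :
    dot f g = ∑ x ∈ s, g.coeff x * f.coeff x := by
  simp only [dot, LinearMap.compl₁₂_apply, LinearMap.comp_apply, Finsupp.bilinearCombination_apply]
  exact Finsupp.linearCombination_apply_of_mem_supported ℝ hs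

lemma dot_single (f : ℝ[G]) (x : G) (a : ℝ) : dot f (.single x a) = a * f.coeff x := by
  rw [dot_eq_sum (g := .single x a) f Finsupp.support_single_subset, sum_singleton,
    AddMonoidAlgebra.coeff_single, Finsupp.single_eq_same]

lemma isPosSemidef_dot : (dot : LinearMap.BilinForm ℝ ℝ[G]).IsPosSemidef := by
  classical
  refine { eq := fun f g ↦ ?_, nonneg := fun f ↦ ?_ }
  · rw [dot_eq_sum f subset_union_right, dot_eq_sum g subset_union_left]
    exact sum_congr rfl fun x _ ↦ mul_comm _ _
  · rw [dot_eq_sum f subset_rfl]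
    exact sum_nonneg fun x _ ↦ mul_self_nonneg _

/-- The cone of pointwise nonnegative finitely supported functions. -/
noncomputable def nonnegCone (G : Type*) : PointedCone ℝ ℝ[G] :=
  (PointedCone.positive ℝ (G →₀ ℝ)).comap (AddMonoidAlgebra.coeffLinearEquiv ℝ).toLinearMap

lemma mem_nonnegCone {f : ℝ[G]} : f ∈ nonnegCone G ↔ ∀ x, 0 ≤ f.coeff x := by
  simp [nonnegCone, PointedCone.mem_positive, Finsupp.le_def]

variable [AddCommGroup G]

/-- The uniform probability distribution on `s`, as a convolution kernel. -/
noncomputable def uniformKernel (s : Finset G) : ℝ[G] := (#s : ℝ)⁻¹ • ∑ y ∈ s, .single y 1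

lemma coeff_uniformKernel_mul (s : Finset G) (f : ℝ[G]) (x : G) :
    (uniformKernel s * f).coeff x = (#s : ℝ)⁻¹ * ∑ y ∈ s, f.coeff (x - y) := by
  simp [uniformKernel, sum_mul, neg_add_eq_sub]

lemma dot_single_mul (y : G) (f g : ℝ[G]) :
    dot (.single y 1 * f) g = dot f (.single (-y) 1 * g) := by
  induction g using AddMonoidAlgebra.induction_linear with
  | zero => simp
  | add g₁ g₂ h₁ h₂ => simp only [mul_add, map_add, h₁, h₂]
  | single x a => simp [dot_single, AddMonoidAlgebra.single_mul_single]

lemma dot_uniformKernel_mul {s : Finset G} (hs : ∀ x, x ∈ s ↔ -x ∈ s) (f g : ℝ[G]) :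
    dot (uniformKernel s * f) g = dot f (uniformKernel s * g) := by
  simp only [uniformKernel, smul_mul_assoc, sum_mul, map_smul, map_sum, LinearMap.smul_apply,
    LinearMap.sum_apply, dot_single_mul]
  congr 1
  exact sum_equiv (Equiv.neg G) hs fun _ _ ↦ rfl

lemma dot_uniformKernel_mul_self_le (s : Finset G) (f : ℝ[G]) :
    dot (uniformKernel s * f) (uniformKernel s * f) ≤ dot f f := by
  have hsum : dot (∑ y ∈ s, .single y 1 * f) (∑ y ∈ s, .single y 1 * f)
      ≤ #s * ∑ _y ∈ s, dot f f := by
    refine (apply_sum_sum_le isPosSemidef_dot s _).trans_eq ?_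
    simp only [dot_single_mul, ← mul_assoc, AddMonoidAlgebra.single_mul_single, neg_add_cancel,
      one_mul, ← AddMonoidAlgebra.one_def]
  calc dot (uniformKernel s * f) (uniformKernel s * f)
      = (#s : ℝ)⁻¹ ^ 2 * dot (∑ y ∈ s, .single y 1 * f) (∑ y ∈ s, .single y 1 * f) := by
        simp only [uniformKernel, smul_mul_assoc, sum_mul, map_smul, LinearMap.smul_apply,
          smul_eq_mul]
        ring
    _ ≤ (#s : ℝ)⁻¹ ^ 2 * (#s * ∑ _y ∈ s, dot f f) := by gcongr
    _ = ((#s : ℝ)⁻¹ * #s) ^ 2 * dot f f := by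
        rw [sum_const, nsmul_eq_mul]
        ring
    _ ≤ 1 ^ 2 * dot f f := by
        gcongr
        · exact isPosSemidef_dot.nonneg f
        · exact inv_mul_le_one
    _ = dot f f := by rw [one_pow, one_mul]

lemma isSymmSubMarkov_uniformKernel {s : Finset G} (hs : ∀ x, x ∈ s ↔ -x ∈ s) :
    IsSymmSubMarkov dot (nonnegCone G) (LinearMap.mulLeft ℝ (uniformKernel s)) where
  isPosSemidef := isPosSemidef_dot
  apply_nonneg f hf g hg := by
    rw [dot_eq_sum f subset_rfl]
    exact sum_nonneg fun x _ ↦ mul_nonneg (mem_nonnegCone.1 hg x) (mem_nonnegCone.1 hf x)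
  map_mem f hf := mem_nonnegCone.2 fun x ↦ by
    rw [LinearMap.mulLeft_apply, coeff_uniformKernel_mul]
    exact mul_nonneg (by positivity) (sum_nonneg fun y _ ↦ mem_nonnegCone.1 hf _)
  apply_symm := dot_uniformKernel_mul hs
  apply_map_self_le := dot_uniformKernel_mul_self_le s

end Kernels

section Fourier

open MeasureTheory UnitAddTorus

attribute [local instance] instMeasureSpaceUnitAddCircle
attribute [local instance] instIsProbabilityMeasureUnitAddCircleVolume

variable {ι : Type*} [Fintype ι]

/-- The Fourier transform of finitely supported functions on `ℤ^ι`, which turns convolutions into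
products. -/
noncomputable def fourierTransform : ℝ[ι → ℤ] →ₐ[ℝ] C(UnitAddTorus ι, ℂ) :=
  AddMonoidAlgebra.lift ℝ C(UnitAddTorus ι, ℂ) (ι → ℤ)
    { toFun := fun n ↦ mFourier n.toAdd
      map_one' := mFourier_zero
      map_mul' := fun _ _ ↦ ContinuousMap.ext fun _ ↦ mFourier_add }

lemma fourierTransform_eq_sum (f : ℝ[ι → ℤ]) :
    fourierTransform f = ∑ n ∈ f.coeff.support, (f.coeff n : ℂ) • mFourier n := by
  rw [fourierTransform, AddMonoidAlgebra.lift_apply, Finsupp.sum]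
  rfl

lemma dot_self_eq_integral (f : ℝ[ι → ℤ]) :
    dot f f = ∫ x, ‖fourierTransform f x‖ ^ 2 := by
  have hL : ContinuousMap.toLp 2 volume ℂ (fourierTransform f)
      = ∑ n ∈ f.coeff.support, (f.coeff n : ℂ) • mFourierLp 2 n := by
    simp only [fourierTransform_eq_sum, map_sum, map_smul, mFourierLp]
  have hinner := orthonormal_mFourier.inner_sum (fun n ↦ (f.coeff n : ℂ)) (fun n ↦ f.coeff n)
    f.coeff.support
  rw [← hL, ContinuousMap.inner_toLp] at hinner
  rw [dot_eq_sum f subset_rfl, ← Complex.ofReal_inj, ← integral_complex_ofReal]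
  simpa [Complex.mul_conj'] using hinner.symm

lemma sum_dot_mul_self_le {κ : Type*} (s : Finset κ) (D : κ → ℝ[ι → ℤ]) {C : ℝ}
    (h : ∀ x, ∑ n ∈ s, ‖fourierTransform (D n) x‖ ^ 2 ≤ C) (f : ℝ[ι → ℤ]) :
    ∑ n ∈ s, dot (D n * f) (D n * f) ≤ C * dot f f := by
  have hint (g : C(UnitAddTorus ι, ℂ)) : Integrable fun x ↦ ‖g x‖ ^ 2 :=
    Continuous.integrable_of_hasCompactSupport (by fun_prop) (.of_compactSpace _)
  simp only [dot_self_eq_integral]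
  rw [← integral_finsetSum s fun n _ ↦ hint _, ← integral_const_mul]
  refine integral_mono (integrable_finsetSum s fun n _ ↦ hint _) ((hint _).const_mul C) fun x ↦ ?_
  simp only [map_mul, ContinuousMap.mul_apply, norm_mul, mul_pow, ← sum_mul]
  exact mul_le_mul_of_nonneg_right (h x) (sq_nonneg _)

lemma exists_angle_mFourier_eq (z : UnitAddTorus ι) :
    ∃ θ : ι → ℝ, ∀ n, mFourier n z = ∏ i, Complex.exp (n i * θ i * Complex.I) := by
  choose x hx using fun i ↦ QuotientAddGroup.mk_surjective (z i)
  refine ⟨fun i ↦ 2 * Real.pi * x i, fun n ↦ prod_congr rfl fun i _ ↦ ?_⟩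
  rw [← hx]
  refine fourier_coe_apply.trans ?_
  push_cast
  ring_nf

lemma fourierTransform_uniformKernel (s : Finset (ι → ℤ)) (z : UnitAddTorus ι) :
    fourierTransform (uniformKernel s) z = 𝔼 n ∈ s, mFourier n z := by
  simp [uniformKernel, fourierTransform, expect_eq_sum_div_card, div_eq_inv_mul]

end Fourier

section ScalarCesaroMean

variable {κ : ℝ} {M : ℕ}

lemma abs_pow_le_one (hκ : |κ| ≤ 1) (j : ℕ) : |κ ^ j| ≤ 1 := by
  rw [abs_pow]
  exact pow_le_one₀ (abs_nonneg _) hκ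

lemma cesaroMean_eq_expect (a : ℝ) (M : ℕ) : cesaroMean a M = 𝔼 j ∈ range M, a ^ j := by
  rw [cesaroMean, expect_eq_sum_div_card, card_range, smul_eq_mul, inv_mul_eq_div]

lemma abs_cesaroMean_le_one (hκ : |κ| ≤ 1) (hM : M ≠ 0) : |cesaroMean κ M| ≤ 1 := by
  rw [cesaroMean_eq_expect]
  exact (abs_expect_le _ _).trans
    (expect_le (nonempty_range_iff.2 hM) fun j _ ↦ abs_pow_le_one hκ j)

lemma abs_cesaroMean_mul_le_two (hκ : |κ| ≤ 1) : |cesaroMean κ M| * (M * (1 - κ)) ≤ 2 := by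
  have hκ₁ : 0 ≤ 1 - κ := sub_nonneg.2 (abs_le.1 hκ).2
  rcases eq_or_ne M 0 with rfl | hM
  · simp
  have hM₀ : (M : ℝ) ≠ 0 := by exact_mod_cast hM
  calc |cesaroMean κ M| * (M * (1 - κ)) = |cesaroMean κ M * (M * (1 - κ))| := by
        rw [abs_mul, abs_of_nonneg (a := M * (1 - κ)) (by positivity)]
    _ = |1 - κ ^ M| := by
        rw [← geom_sum_mul_neg κ M, cesaroMean, smul_eq_mul]
        field_simp
    _ ≤ |1| + |κ ^ M| := abs_sub _ _
    _ ≤ 2 := by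
        rw [abs_one]
        linarith [abs_pow_le_one hκ M]

lemma abs_one_sub_cesaroMean_le (hκ : |κ| ≤ 1) (hM : M ≠ 0) :
    |1 - cesaroMean κ M| ≤ M * (1 - κ) := by
  have hκ₁ : 0 ≤ 1 - κ := sub_nonneg.2 (abs_le.1 hκ).2
  have hpow (j : ℕ) (hj : j ∈ range M) : |1 - κ ^ j| ≤ M * (1 - κ) := by
    calc |1 - κ ^ j| = |∑ i ∈ range j, κ ^ i| * (1 - κ) := by
          rw [← geom_sum_mul_neg κ j, abs_mul, abs_of_nonneg hκ₁]
      _ ≤ (∑ i ∈ range j, 1) * (1 - κ) := by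
          gcongr
          exact (abs_sum_le_sum_abs _ _).trans (sum_le_sum fun i _ ↦ abs_pow_le_one hκ i)
      _ ≤ M * (1 - κ) := by
          gcongr
          simpa using (mem_range.1 hj).le
  have hrange : (range M).Nonempty := nonempty_range_iff.2 hM
  have hmean : 1 - cesaroMean κ M = 𝔼 j ∈ range M, (1 - κ ^ j) := by
    rw [expect_sub_distrib, expect_const hrange, cesaroMean_eq_expect]
  rw [hmean]
  exact (abs_expect_le _ _).trans (expect_le hrange hpow)

end ScalarCesaroMean

section Saturation

/-- The increasing function `y ^ 2 / (1 + y ^ 2)` of `y ≥ 0`. Its increments over dyadic intervals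
are summable majorants for squares that are small at both small and large `y`. -/
noncomputable def saturation (y : ℝ) : ℝ := y ^ 2 / (1 + y ^ 2)

lemma saturation_two_mul_sub (y : ℝ) :
    saturation (2 * y) - saturation y = 3 * y ^ 2 / ((1 + 4 * y ^ 2) * (1 + y ^ 2)) := by
  unfold saturation
  rw [mul_pow, div_sub_div _ _ (by positivity) (by positivity)]
  congr 1 <;> ring

lemma saturation_two_mul_sub_nonneg (y : ℝ) : 0 ≤ saturation (2 * y) - saturation y := by
  rw [saturation_two_mul_sub]
  positivity

lemma sum_saturation_sub_le_one (T : Finset ℕ) (a : ℝ) :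
    ∑ k ∈ T, (saturation (2 * (2 ^ k * a)) - saturation (2 ^ k * a)) ≤ 1 := by
  obtain ⟨n, hn⟩ := T.exists_nat_subset_range
  calc ∑ k ∈ T, (saturation (2 * (2 ^ k * a)) - saturation (2 ^ k * a))
      ≤ ∑ k ∈ range n, (saturation (2 * (2 ^ k * a)) - saturation (2 ^ k * a)) :=
        sum_le_sum_of_subset_of_nonneg hn fun k _ _ ↦ saturation_two_mul_sub_nonneg _
    _ = saturation (2 ^ n * a) - saturation (2 ^ 0 * a) := by
        simp only [← mul_assoc, ← pow_succ']
        exact sum_range_sub (fun k ↦ saturation (2 ^ k * a)) n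
    _ ≤ 1 - 0 := by
        unfold saturation
        gcongr
        · exact div_le_one_of_le₀ (by linarith) (by positivity)
        · positivity
    _ = 1 := sub_zero 1

lemma sq_le_saturation_sub {L b y : ℝ} (hb : 0 ≤ b) (hy : 0 ≤ y) (hsmall : b ≤ L * y)
    (hlarge : b * y ≤ L) :
    b ^ 2 ≤ 10 / 3 * L ^ 2 * (saturation (2 * y) - saturation y) := by
  have hsmall' : b ^ 2 ≤ L ^ 2 * y ^ 2 := by
    rw [← mul_pow]
    exact pow_le_pow_left₀ hb hsmall 2
  have hlarge' : b ^ 2 * y ^ 2 ≤ L ^ 2 := by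
    rw [← mul_pow]
    exact pow_le_pow_left₀ (by positivity) hlarge 2
  rw [saturation_two_mul_sub, mul_div_assoc', le_div_iff₀ (by positivity)]
  rcases le_total (y ^ 2) 1 with hy₁ | hy₁
  · calc b ^ 2 * ((1 + 4 * y ^ 2) * (1 + y ^ 2)) ≤ b ^ 2 * ((1 + 4 * 1) * (1 + 1)) := by gcongr
      _ ≤ 10 / 3 * L ^ 2 * (3 * y ^ 2) := by linarith
  · calc b ^ 2 * ((1 + 4 * y ^ 2) * (1 + y ^ 2)) ≤ b ^ 2 * (10 * (y ^ 2 * y ^ 2)) := by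
          refine mul_le_mul_of_nonneg_left ?_ (sq_nonneg b)
          nlinarith [mul_le_mul hy₁ hy₁ zero_le_one (sq_nonneg y)]
      _ = 10 * y ^ 2 * (b ^ 2 * y ^ 2) := by ring
      _ ≤ 10 * y ^ 2 * L ^ 2 := by gcongr
      _ = 10 / 3 * L ^ 2 * (3 * y ^ 2) := by ring

end Saturation

section SquareFunction

lemma sq_sub_cesaroMean_sub_le {κ m c c' N : ℝ} {M : ℕ} (hκ₀ : 0 ≤ κ) (hκ₁ : κ ≤ 1) (hM : M ≠ 0)
    (hMN : M ≤ N) (hNM : N ≤ 2 * M) (hc : |c| ≤ 1) (hc' : |c'| ≤ 1)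
    (hdecay : |m| * (N * (1 - κ ^ 2)) ≤ 4088) (hnear : |c - m| ≤ 16 * N * (1 - κ)) :
    (m - c * cesaroMean κ M - c' * cesaroMean (-κ) M) ^ 2
      ≤ 20 / 3 * 4090 ^ 2 * (saturation (2 * (M * (1 - κ))) - saturation (M * (1 - κ)))
        + 8 * (1 / M) ^ 2 := by
  have hκ : |κ| ≤ 1 := abs_le.2 ⟨by linarith, hκ₁⟩
  have hM₀ : (0 : ℝ) < M := by exact_mod_cast Nat.pos_of_ne_zero hM
  have hκ' : 0 ≤ 1 - κ := sub_nonneg.2 hκ₁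
  have hy : 0 ≤ M * (1 - κ) := mul_nonneg hM₀.le hκ'
  have hmul {r z : ℝ} (hr : |r| ≤ 1) : |r * z| ≤ |z| := by
    rw [abs_mul]
    exact mul_le_of_le_one_left (abs_nonneg z) hr
  have hminus : |c' * cesaroMean (-κ) M| ≤ 2 * (1 / M) := by
    rw [mul_one_div, le_div_iff₀ hM₀]
    calc |c' * cesaroMean (-κ) M| * M ≤ |cesaroMean (-κ) M| * (M * (1 - -κ)) :=
          mul_le_mul (hmul hc') (le_mul_of_one_le_right hM₀.le (by linarith)) hM₀.le (abs_nonneg _)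
      _ ≤ 2 := abs_cesaroMean_mul_le_two (by rwa [abs_neg])
  have hsmall : |m - c * cesaroMean κ M| ≤ 4090 * (M * (1 - κ)) := by
    calc |m - c * cesaroMean κ M| = |c * (1 - cesaroMean κ M) - (c - m)| := by ring_nf
      _ ≤ M * (1 - κ) + 16 * N * (1 - κ) := (abs_sub _ _).trans
          (add_le_add ((hmul hc).trans (abs_one_sub_cesaroMean_le hκ hM)) hnear)
      _ ≤ 4090 * (M * (1 - κ)) := by linarith [mul_le_mul_of_nonneg_right hNM hκ']
  have hlarge : |m - c * cesaroMean κ M| * (M * (1 - κ)) ≤ 4090 := by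
    calc |m - c * cesaroMean κ M| * (M * (1 - κ))
        ≤ (|m| + |cesaroMean κ M|) * (M * (1 - κ)) := by
          gcongr
          exact (abs_sub _ _).trans (add_le_add le_rfl (hmul hc))
      _ = |m| * (M * (1 - κ)) + |cesaroMean κ M| * (M * (1 - κ)) := add_mul _ _ _
      _ ≤ |m| * (N * (1 - κ ^ 2)) + 2 := by
          gcongr ?_ * (?_ * (1 - ?_)) + ?_
          · exact hM₀.le.trans hMN
          · exact pow_le_of_le_one hκ₀ hκ₁ two_ne_zero
          · exact abs_cesaroMean_mul_le_two hκ
      _ ≤ 4090 := by linarith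
  have hplus := sq_le_saturation_sub (abs_nonneg _) hy hsmall hlarge
  have hminus' := pow_le_pow_left₀ (abs_nonneg _) hminus 2
  rw [sq_abs] at hplus hminus'
  linarith [sq_nonneg (m - c * cesaroMean κ M + c' * cesaroMean (-κ) M)]

lemma sq_sub_cesaroMean_abs_sub_le {κ m c N : ℝ} {M : ℕ} (hκ : |κ| ≤ 1) (hM : M ≠ 0)
    (hMN : M ≤ N) (hNM : N ≤ 2 * M) (hc : |c| ≤ 1) (hdecay : |m| * (N * (1 - κ ^ 2)) ≤ 4088)
    (hplus : |1 - m| ≤ 16 * N * (1 - κ)) (hminus : |c - m| ≤ 16 * N * (1 + κ)) :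
    (m - cesaroMean κ M - c * cesaroMean (-κ) M) ^ 2
      ≤ 20 / 3 * 4090 ^ 2 * (saturation (2 * (M * (1 - |κ|))) - saturation (M * (1 - |κ|)))
        + 8 * (1 / M) ^ 2 := by
  have hκ' := abs_le.1 hκ
  rcases le_total 0 κ with h₀ | h₀
  · rw [abs_of_nonneg h₀]
    simpa only [one_mul] using
      sq_sub_cesaroMean_sub_le h₀ hκ'.2 hM hMN hNM abs_one.le hc hdecay hplus
  · rw [abs_of_nonpos h₀, sub_right_comm]
    simpa only [one_mul, neg_neg] using sq_sub_cesaroMean_sub_le (neg_nonneg.2 h₀)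
      (neg_le.1 hκ'.1) hM hMN hNM hc abs_one.le (by rwa [neg_sq]) (by rwa [sub_neg_eq_add])

lemma sq_sub_cesaroMean_sub_le_nine {κ m c : ℝ} {M : ℕ} (hκ : |κ| ≤ 1) (hM : M ≠ 0)
    (hm : |m| ≤ 1) (hc : |c| ≤ 1) : (m - cesaroMean κ M - c * cesaroMean (-κ) M) ^ 2 ≤ 9 := by
  rw [← sq_abs, show (9 : ℝ) = 3 ^ 2 by norm_num]
  gcongr
  calc |m - cesaroMean κ M - c * cesaroMean (-κ) M|
      ≤ |m| + |cesaroMean κ M| + |c| * |cesaroMean (-κ) M| := by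
        rw [← abs_mul]
        exact (abs_sub _ _).trans (add_le_add (abs_sub _ _) le_rfl)
    _ ≤ 1 + 1 + 1 * 1 := by
        gcongr
        · exact abs_cesaroMean_le_one hκ hM
        · exact abs_cesaroMean_le_one (by rwa [abs_neg]) hM
    _ = 3 := by norm_num

lemma nine_le_saturation_sub {y : ℝ} (hy : 1 / 8 ≤ y) (hy₁ : y ≤ 1) :
    9 ≤ 216 * (saturation (2 * y) - saturation y) := by
  rw [saturation_two_mul_sub, mul_div_assoc', le_div_iff₀ (by positivity)]
  have h₁ : y ^ 2 ≤ 1 := pow_le_one₀ (by linarith) hy₁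
  have h₈ : (1 / 8) ^ 2 ≤ y ^ 2 := by gcongr
  nlinarith

lemma sum_one_div_four_pow_le_two (T : Finset ℕ) : ∑ k ∈ T, (1 / 4 : ℝ) ^ k ≤ 2 := by
  have h := hasSum_geometric_of_lt_one (r := (1 / 4 : ℝ)) (by norm_num) (by norm_num)
  exact (sum_le_hasSum T (fun k _ ↦ by positivity) h).trans (by norm_num)

variable {ι : Type*} [Fintype ι] [DecidableEq ι] {q : ℝ}

lemma sq_ballSymbol_sub_cesaroMean_le (hq : 1 ≤ q) {N : ℝ} {k : ℕ} (hkN : 2 ^ k ≤ N)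
    (hNk : N ≤ 2 * 2 ^ k) (hN : N ≤ Fintype.card ι) (θ : ι → ℝ) :
    (ballSymbol q N θ - cesaroMean (meanCos θ) (2 ^ k)
        - ballSymbol q N (fun _ : ι ↦ Real.pi) * cesaroMean (-meanCos θ) (2 ^ k)) ^ 2
      ≤ 20 / 3 * 4090 ^ 2 * (saturation (2 * (2 ^ k * (1 - |meanCos θ|)))
          - saturation (2 ^ k * (1 - |meanCos θ|)))
        + 8 * (1 / 4) ^ k
        + 216 * (saturation (2 * (2 ^ k * (1 / Fintype.card ι)))
          - saturation (2 ^ k * (1 / Fintype.card ι))) := by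
  have hκ := abs_meanCos_le_one θ
  have hM : 2 ^ k ≠ 0 := by positivity
  have hN₁ : 1 ≤ N := (one_le_pow₀ one_le_two).trans hkN
  have hN₀ : 0 ≤ N := zero_le_one.trans hN₁
  have hd : (0 : ℝ) < Fintype.card ι := one_pos.trans_le (hN₁.trans hN)
  rcases le_or_gt (4 * N) (Fintype.card ι) with h | h
  · have hcast : ((2 ^ k : ℕ) : ℝ) = 2 ^ k := by push_cast; rfl
    have hpow : (1 / (2 : ℝ) ^ k) ^ 2 = (1 / 4) ^ k := by
      rw [← one_div_pow, ← pow_mul, mul_comm, pow_mul]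
      norm_num
    have hmain := sq_sub_cesaroMean_abs_sub_le (M := 2 ^ k) hκ hM (by rwa [hcast])
      (by rwa [hcast]) (abs_ballSymbol_le_one hq hN₀ _) (abs_ballSymbol_mul_le hq hN₁ h θ)
      (abs_one_sub_ballSymbol_le hq hN₀ h θ) (abs_ballSymbol_pi_sub_ballSymbol_le hq hN₀ h θ)
    rw [hcast, hpow] at hmain
    linarith [saturation_two_mul_sub_nonneg (2 ^ k * (1 / Fintype.card ι))]
  · have htriv := sq_sub_cesaroMean_sub_le_nine hκ hM (abs_ballSymbol_le_one hq hN₀ θ)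
      (abs_ballSymbol_le_one hq hN₀ fun _ : ι ↦ Real.pi)
    have hsat := nine_le_saturation_sub (y := 2 ^ k * (1 / Fintype.card ι))
      (by rw [mul_one_div, le_div_iff₀ hd]; linarith)
      (by rw [mul_one_div, div_le_one hd]; exact hkN.trans hN)
    have hpos : (0 : ℝ) ≤ (1 / 4) ^ k := by positivity
    linarith [saturation_two_mul_sub_nonneg (2 ^ k * (1 - |meanCos θ|))]

lemma sum_sq_ballSymbol_sub_cesaroMean_le (hq : 1 ≤ q) {κ : Type*} {s : Finset κ} {ν : κ → ℕ}
    {N : κ → ℝ} (hν : Set.InjOn ν s) (hνN : ∀ n ∈ s, 2 ^ ν n ≤ N n)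
    (hNν : ∀ n ∈ s, N n ≤ 2 * 2 ^ ν n) (hN : ∀ n ∈ s, N n ≤ Fintype.card ι) (θ : ι → ℝ) :
    ∑ n ∈ s, (ballSymbol q (N n) θ - cesaroMean (meanCos θ) (2 ^ ν n)
        - ballSymbol q (N n) (fun _ : ι ↦ Real.pi) * cesaroMean (-meanCos θ) (2 ^ ν n)) ^ 2
      ≤ 7 * 4090 ^ 2 := by
  refine (sum_le_sum fun n hn ↦
    sq_ballSymbol_sub_cesaroMean_le hq (hνN n hn) (hNν n hn) (hN n hn) θ).trans ?_
  rw [← sum_image (f := fun k ↦ 20 / 3 * 4090 ^ 2 *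
    (saturation (2 * (2 ^ k * (1 - |meanCos θ|))) - saturation (2 ^ k * (1 - |meanCos θ|)))
    + 8 * (1 / 4) ^ k + 216 * (saturation (2 * (2 ^ k * (1 / Fintype.card ι)))
      - saturation (2 ^ k * (1 / Fintype.card ι)))) hν, sum_add_distrib, sum_add_distrib,
    ← mul_sum, ← mul_sum, ← mul_sum]
  linarith [sum_saturation_sub_le_one (s.image ν) (1 - |meanCos θ|),
    sum_one_div_four_pow_le_two (s.image ν),
    sum_saturation_sub_le_one (s.image ν) (1 / Fintype.card ι)]

end SquareFunction

section KernelMaximal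

variable {G : Type*}

lemma single_mem_nonnegCone (x : G) {a : ℝ} (ha : 0 ≤ a) : .single x a ∈ nonnegCone G :=
  mem_nonnegCone.2 (Finsupp.single_nonneg.2 ha)

lemma coeff_sum_single [DecidableEq G] (s : Finset G) (g : G → ℝ) (x : G) :
    (∑ y ∈ s, .single y (g y) : ℝ[G]).coeff x = if x ∈ s then g x else 0 := by
  simp [AddMonoidAlgebra.coeff_sum, Finsupp.finsetSum_apply, Finsupp.single_apply]

lemma dot_sum_single_self (s : Finset G) (g : G → ℝ) :
    dot (∑ y ∈ s, .single y (g y)) (∑ y ∈ s, .single y (g y)) = ∑ y ∈ s, g y ^ 2 := by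
  classical
  rw [map_sum]
  refine sum_congr rfl fun y hy ↦ ?_
  rw [dot_single, coeff_sum_single, if_pos hy, sq]

lemma sum_sq_coeff_le_dot (s : Finset G) (f : ℝ[G]) : ∑ x ∈ s, f.coeff x ^ 2 ≤ dot f f := by
  classical
  simp only [dot_eq_sum f (subset_union_left (s₁ := f.coeff.support) (s₂ := s)), ← sq]
  exact sum_le_sum_of_subset_of_nonneg subset_union_right fun _ _ _ ↦ sq_nonneg _

lemma sum_sq_coeff_apply_le {κ : Type*} {s : Finset κ} (X : Finset G) (u : κ → ℝ[G]) {n : G → κ}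
    (hn : ∀ x, n x ∈ s) : ∑ x ∈ X, (u (n x)).coeff x ^ 2 ≤ ∑ m ∈ s, dot (u m) (u m) := by
  calc ∑ x ∈ X, (u (n x)).coeff x ^ 2 ≤ ∑ x ∈ X, ∑ m ∈ s, (u m).coeff x ^ 2 :=
        sum_le_sum fun x _ ↦ single_le_sum (f := fun m ↦ (u m).coeff x ^ 2)
          (fun _ _ ↦ sq_nonneg _) (hn x)
    _ = ∑ m ∈ s, ∑ x ∈ X, (u m).coeff x ^ 2 := sum_comm
    _ ≤ ∑ m ∈ s, dot (u m) (u m) := sum_le_sum fun m _ ↦ sum_sq_coeff_le_dot X (u m)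

variable [AddCommGroup G] {k f : ℝ[G]}

lemma mulLeft_cesaroMean (k : ℝ[G]) (N : ℕ) :
    cesaroMean (LinearMap.mulLeft ℝ k) N = LinearMap.mulLeft ℝ (cesaroMean k N) :=
  (map_cesaroMean (Algebra.lmul ℝ ℝ[G]) k N).symm

lemma abs_coeff_cesaroMean_neg_mul_le (h : IsSymmSubMarkov dot (nonnegCone G) (.mulLeft ℝ k))
    (hf : f ∈ nonnegCone G) (N : ℕ) (x : G) :
    |(cesaroMean (-k) N * f).coeff x| ≤ (cesaroMean k N * f).coeff x := by
  have hcoeff (a : ℝ[G]) :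
      (cesaroMean a N * f).coeff x = (N : ℝ)⁻¹ * ∑ j ∈ range N, (a ^ j * f).coeff x := by
    simp [cesaroMean, sum_mul, AddMonoidAlgebra.coeff_sum]
  have hpow (j : ℕ) : |((-k) ^ j * f).coeff x| = (k ^ j * f).coeff x := by
    have hmem := h.pow_apply_mem hf j
    rw [LinearMap.pow_mulLeft, LinearMap.mulLeft_apply] at hmem
    have hnonneg := mem_nonnegCone.1 hmem x
    rcases j.even_or_odd with hj | hj <;> simp [hj.neg_pow, hnonneg]
  rw [hcoeff, hcoeff, abs_mul, abs_of_nonneg (by positivity : (0 : ℝ) ≤ (N : ℝ)⁻¹)]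
  gcongr
  exact (abs_sum_le_sum_abs _ _).trans_eq (sum_congr rfl fun j _ ↦ hpow j)

lemma sum_sq_coeff_cesaroMean_mul_le (h : IsSymmSubMarkov dot (nonnegCone G) (.mulLeft ℝ k))
    (hf : f ∈ nonnegCone G) (s : Finset G) (ν : G → ℕ) :
    ∑ x ∈ s, (cesaroMean k (2 ^ ν x) * f).coeff x ^ 2 ≤ 16 * dot f f := by
  set w : G → ℝ := fun x ↦ (cesaroMean k (2 ^ ν x) * f).coeff x
  set u : ℝ[G] := ∑ x ∈ s, cesaroMean k (2 ^ ν x) * .single x (w x)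
  have hcesaro := h.cesaroMean_apply_mem hf
  simp only [mulLeft_cesaroMean, LinearMap.mulLeft_apply] at hcesaro
  have hu := h.apply_sum_cesaroMean_le s ν (g := fun x ↦ .single x (w x)) fun x ↦
    single_mem_nonnegCone x (mem_nonnegCone.1 (hcesaro _) x)
  simp only [mulLeft_cesaroMean, LinearMap.mulLeft_apply, dot_sum_single_self] at hu
  have hdual : ∑ x ∈ s, w x ^ 2 = dot f u := by
    rw [map_sum]
    refine sum_congr rfl fun x _ ↦ ?_
    have hsymm := h.cesaroMean_apply_symm (2 ^ ν x) f (.single x (w x))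
    rw [mulLeft_cesaroMean, LinearMap.mulLeft_apply, LinearMap.mulLeft_apply, dot_single] at hsymm
    rw [← hsymm, sq]
  have hyoung := two_mul_apply_le h.isPosSemidef ((4 : ℝ) • f) ((1 / 4 : ℝ) • u)
  simp only [map_smul, LinearMap.smul_apply, smul_eq_mul] at hyoung
  linarith

end KernelMaximal

section ComparisonKernel

open UnitAddTorus

variable {ι : Type*} [Fintype ι] [DecidableEq ι] {q : ℝ}

/-- The steps `± e i` of the simple random walk on `ι → ℤ`. -/
def walkSteps (ι : Type*) [Fintype ι] [DecidableEq ι] : Finset (ι → ℤ) :=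
  univ.image fun p : ι × ℤˣ ↦ Pi.single p.1 (p.2 : ℤ)

/-- The convolution kernel of the simple random walk on `ι → ℤ`. -/
noncomputable def walkKernel (ι : Type*) [Fintype ι] [DecidableEq ι] : ℝ[ι → ℤ] :=
  uniformKernel (walkSteps ι)

/-- The error in approximating the average over `energyBall q ∅ N` by the Cesàro mean of `2 ^ ν`
steps of the random walk. Near `θ = (π, …, π)` the symbol of the ball is approximated instead by the
mean for the kernel with reversed sign, which explains the last term. -/
noncomputable def comparisonKernel (q N : ℝ) (ν : ℕ) : ℝ[ι → ℤ] :=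
  uniformKernel (energyBall q ∅ N) - cesaroMean (walkKernel ι) (2 ^ ν)
    - ballSymbol q N (fun _ : ι ↦ Real.pi) • cesaroMean (-walkKernel ι) (2 ^ ν)

lemma mem_walkSteps_neg (x : ι → ℤ) : x ∈ walkSteps ι ↔ -x ∈ walkSteps ι := by
  have hneg (x : ι → ℤ) (hx : x ∈ walkSteps ι) : -x ∈ walkSteps ι := by
    obtain ⟨p, -, rfl⟩ := mem_image.1 hx
    exact mem_image.2 ⟨(p.1, -p.2), mem_univ _, by simp [Pi.single_neg]⟩
  exact ⟨hneg x, fun hx ↦ neg_neg x ▸ hneg _ hx⟩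

lemma isSymmSubMarkov_walkKernel :
    IsSymmSubMarkov dot (nonnegCone (ι → ℤ)) (.mulLeft ℝ (walkKernel ι)) :=
  isSymmSubMarkov_uniformKernel mem_walkSteps_neg

lemma expect_walkSteps_prod_exp (θ : ι → ℝ) :
    𝔼 x ∈ walkSteps ι, ∏ i, Complex.exp (x i * θ i * Complex.I) = (meanCos θ : ℂ) := by
  have hinj : Function.Injective fun p : ι × ℤˣ ↦ (Pi.single p.1 (p.2 : ℤ) : ι → ℤ) := by
    rintro ⟨i, u⟩ ⟨j, v⟩ h
    have hi : (Pi.single i (u : ℤ) : ι → ℤ) i = (Pi.single j (v : ℤ) : ι → ℤ) i := congrFun h i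
    rw [Pi.single_eq_same] at hi
    obtain rfl | hij := eq_or_ne i j
    · rw [Pi.single_eq_same] at hi
      exact Prod.ext rfl (Units.ext hi)
    · rw [Pi.single_eq_of_ne hij] at hi
      exact absurd hi u.ne_zero
  have hprod (i : ι) (u : ℤˣ) :
      ∏ j, Complex.exp ((Pi.single i (u : ℤ) : ι → ℤ) j * θ j * Complex.I)
        = Complex.exp (u * θ i * Complex.I) := by
    rw [Fintype.prod_eq_single i fun j hj ↦ by simp [hj], Pi.single_eq_same]
  have hcos (i : ι) : 𝔼 u : ℤˣ, Complex.exp (u * θ i * Complex.I) = Complex.cos (θ i) := by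
    rw [Fintype.expect_eq_sum_div_card, show (univ : Finset ℤˣ) = {1, -1} from rfl,
      sum_pair (by decide), Complex.cos]
    simp
  rw [walkSteps, expect_image hinj.injOn, ← univ_product_univ, expect_product]
  simp only [hprod, hcos, meanCos]
  push_cast
  rfl

lemma exists_angle_fourierTransform_eq (hq : 1 ≤ q) (z : UnitAddTorus ι) :
    ∃ θ : ι → ℝ, fourierTransform (walkKernel ι) z = meanCos θ ∧
      ∀ N, fourierTransform (uniformKernel (energyBall q ∅ N)) z = ballSymbol q N θ := by
  obtain ⟨θ, hθ⟩ := exists_angle_mFourier_eq z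
  refine ⟨θ, ?_, fun N ↦ ?_⟩
  · rw [walkKernel, fourierTransform_uniformKernel, ← expect_walkSteps_prod_exp]
    exact expect_congr rfl fun n _ ↦ hθ n
  · rw [fourierTransform_uniformKernel, ← expect_prod_exp_eq_ballSymbol hq]
    exact expect_congr rfl fun n _ ↦ hθ n

omit [DecidableEq ι] in
lemma fourierTransform_cesaroMean {k : ℝ[ι → ℤ]} {z : UnitAddTorus ι} {m : ℝ}
    (hk : fourierTransform k z = m) (M : ℕ) :
    fourierTransform (cesaroMean k M) z = (cesaroMean m M : ℝ) := by
  have heval := map_cesaroMean ((ContinuousMap.evalAlgHom ℝ ℂ z).comp fourierTransform) k M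
  have hreal := map_cesaroMean (Algebra.ofId ℝ ℂ) m M
  exact heval.trans ((congrArg (cesaroMean · M) hk).trans hreal.symm)

lemma sum_dot_comparisonKernel_mul_self_le (hq : 1 ≤ q) {κ : Type*} {s : Finset κ} {ν : κ → ℕ}
    {N : κ → ℝ} (hν : Set.InjOn ν s) (hνN : ∀ n ∈ s, 2 ^ ν n ≤ N n)
    (hNν : ∀ n ∈ s, N n ≤ 2 * 2 ^ ν n) (hN : ∀ n ∈ s, N n ≤ Fintype.card ι) (f : ℝ[ι → ℤ]) :
    ∑ n ∈ s, dot (comparisonKernel q (N n) (ν n) * f) (comparisonKernel q (N n) (ν n) * f)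
      ≤ 7 * 4090 ^ 2 * dot f f := by
  refine sum_dot_mul_self_le s (fun n ↦ comparisonKernel q (N n) (ν n)) (fun z ↦ ?_) f
  obtain ⟨θ, hwalk, hball⟩ := exists_angle_fourierTransform_eq hq z
  have hneg : fourierTransform (-walkKernel ι) z = (-meanCos θ : ℝ) := by
    simp [hwalk]
  have hsymbol (n : κ) : fourierTransform (comparisonKernel q (N n) (ν n)) z
      = (ballSymbol q (N n) θ - cesaroMean (meanCos θ) (2 ^ ν n)
        - ballSymbol q (N n) (fun _ : ι ↦ Real.pi) * cesaroMean (-meanCos θ) (2 ^ ν n) : ℝ) := by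
    rw [comparisonKernel, map_sub, map_sub, map_smul, ContinuousMap.sub_apply,
      ContinuousMap.sub_apply, ContinuousMap.smul_apply, hball, fourierTransform_cesaroMean hwalk,
      fourierTransform_cesaroMean hneg, Complex.real_smul]
    push_cast
    rfl
  simp only [hsymbol, Complex.norm_real, Real.norm_eq_abs, sq_abs]
  exact sum_sq_ballSymbol_sub_cesaroMean_le hq hν hνN hNν hN θ

lemma sum_sq_coeff_comparisonKernel_mul_le (hq : 1 ≤ q) {κ : Type*} {s : Finset κ} {ν : κ → ℕ}
    {N : κ → ℝ} (hν : Set.InjOn ν s) (hνN : ∀ n ∈ s, 2 ^ ν n ≤ N n)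
    (hNν : ∀ n ∈ s, N n ≤ 2 * 2 ^ ν n) (hN : ∀ n ∈ s, N n ≤ Fintype.card ι) (f : ℝ[ι → ℤ])
    (X : Finset (ι → ℤ)) {n : (ι → ℤ) → κ} (hn : ∀ x, n x ∈ s) :
    ∑ x ∈ X, (comparisonKernel q (N (n x)) (ν (n x)) * f).coeff x ^ 2
      ≤ 7 * 4090 ^ 2 * dot f f :=
  (sum_sq_coeff_apply_le X (fun m ↦ comparisonKernel q (N m) (ν m) * f) hn).trans
    (sum_dot_comparisonKernel_mul_self_le hq hν hνN hNν hN f)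

lemma sq_coeff_uniformKernel_energyBall_mul_le (hq : 1 ≤ q) {N : ℝ} (hN : 0 ≤ N) (ν : ℕ)
    {f : ℝ[ι → ℤ]} (hf : f ∈ nonnegCone (ι → ℤ)) (x : ι → ℤ) :
    (uniformKernel (energyBall q ∅ N) * f).coeff x ^ 2
      ≤ 2 * (comparisonKernel q N ν * f).coeff x ^ 2
        + 8 * (cesaroMean (walkKernel ι) (2 ^ ν) * f).coeff x ^ 2 := by
  set a := (cesaroMean (walkKernel ι) (2 ^ ν) * f).coeff x
  set b := ballSymbol q N (fun _ : ι ↦ Real.pi) * (cesaroMean (-walkKernel ι) (2 ^ ν) * f).coeff x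
  set e := (comparisonKernel q N ν * f).coeff x with he
  have hsplit : (uniformKernel (energyBall q ∅ N) * f).coeff x = e + (a + b) := by
    simp only [he, comparisonKernel, sub_mul, smul_mul_assoc, AddMonoidAlgebra.coeff_sub,
      Finsupp.sub_apply, AddMonoidAlgebra.coeff_smul_apply, smul_eq_mul]
    ring
  have hb : |b| ≤ a := calc
    |b| ≤ 1 * |(cesaroMean (-walkKernel ι) (2 ^ ν) * f).coeff x| := by
        rw [abs_mul]
        gcongr
        exact abs_ballSymbol_le_one hq hN _
    _ ≤ a := by
        rw [one_mul]
        exact abs_coeff_cesaroMean_neg_mul_le isSymmSubMarkov_walkKernel hf _ x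
  have hab : (a + b) ^ 2 ≤ (2 * a) ^ 2 :=
    sq_le_sq' (by linarith [neg_le_of_abs_le hb, (abs_nonneg b).trans hb])
      (by linarith [le_of_abs_le hb])
  rw [hsplit]
  linarith [add_sq_le (a := e) (b := a + b)]

lemma sum_sq_coeff_uniformKernel_energyBall_mul_le (hq : 1 ≤ q) {κ : Type*} {s : Finset κ}
    {ν : κ → ℕ} {N : κ → ℝ} (hν : Set.InjOn ν s) (hνN : ∀ n ∈ s, 2 ^ ν n ≤ N n)
    (hNν : ∀ n ∈ s, N n ≤ 2 * 2 ^ ν n) (hN : ∀ n ∈ s, N n ≤ Fintype.card ι) {f : ℝ[ι → ℤ]}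
    (hf : f ∈ nonnegCone (ι → ℤ)) (X : Finset (ι → ℤ)) {n : (ι → ℤ) → κ} (hn : ∀ x, n x ∈ s) :
    ∑ x ∈ X, (uniformKernel (energyBall q ∅ (N (n x))) * f).coeff x ^ 2
      ≤ 16 * 4090 ^ 2 * dot f f := by
  have hpos (x : ι → ℤ) : 0 ≤ N (n x) := le_trans (by positivity) (hνN _ (hn x))
  refine (sum_le_sum fun x _ ↦
    sq_coeff_uniformKernel_energyBall_mul_le hq (hpos x) (ν (n x)) hf x).trans ?_
  rw [sum_add_distrib, ← mul_sum, ← mul_sum]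
  linarith [sum_sq_coeff_comparisonKernel_mul_le hq hν hνN hNν hN f X hn,
    sum_sq_coeff_cesaroMean_mul_le isSymmSubMarkov_walkKernel hf X fun x ↦ ν (n x),
    isPosSemidef_dot.nonneg f]

end ComparisonKernel

section DyadicScales

variable {q : ℝ}

lemma two_pow_rpow (q : ℝ) (n : ℕ) : ((2 : ℝ) ^ n) ^ q = 2 ^ (n * q) := by
  rw [← Real.rpow_natCast, ← Real.rpow_mul zero_le_two]

lemma two_pow_floor_le (hq : 0 ≤ q) (n : ℕ) : (2 : ℝ) ^ ⌊n * q⌋₊ ≤ ((2 : ℝ) ^ n) ^ q := by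
  rw [two_pow_rpow, ← Real.rpow_natCast]
  exact Real.rpow_le_rpow_of_exponent_le one_le_two (Nat.floor_le (by positivity))

lemma le_two_mul_two_pow_floor (q : ℝ) (n : ℕ) :
    ((2 : ℝ) ^ n) ^ q ≤ 2 * (2 : ℝ) ^ ⌊n * q⌋₊ := by
  rw [two_pow_rpow, ← pow_succ', ← Real.rpow_natCast]
  refine Real.rpow_le_rpow_of_exponent_le one_le_two ?_
  exact_mod_cast (Nat.lt_floor_add_one (n * q)).le

lemma strictMono_floor_mul (hq : 1 ≤ q) : StrictMono fun n : ℕ ↦ ⌊n * q⌋₊ := by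
  refine strictMono_nat_of_lt_succ fun n ↦ Nat.lt_of_add_one_le ?_
  rw [← Nat.floor_add_one (by positivity)]
  refine Nat.floor_le_floor ?_
  push_cast
  linarith

/-- The exponents `n` of the dyadic radii `2 ^ n ≤ d ^ (1 / q)`. The range is cut off at `d` only to
make this a `Finset`. -/
noncomputable def dyadicScales (q : ℝ) (d : ℕ) : Finset ℕ :=
  {n ∈ range d | ((2 : ℝ) ^ n) ^ q ≤ d}

lemma mem_dyadicScales (hq : 1 ≤ q) {d n : ℕ} :
    n ∈ dyadicScales q d ↔ (2 : ℝ) ^ n ≤ (d : ℝ) ^ (1 / q) := by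
  have hq₀ : 0 < q := zero_lt_one.trans_le hq
  rw [dyadicScales, mem_filter, one_div, Real.le_rpow_inv_iff_of_pos (by positivity)
    (by positivity) hq₀, and_iff_right_iff_imp, mem_range]
  intro hn
  have hle : (2 : ℝ) ^ n ≤ d := (Real.self_le_rpow_of_one_le (one_le_pow₀ one_le_two) hq).trans hn
  exact n.lt_two_pow_self.trans_le (by exact_mod_cast hle)

lemma dyadicScales_nonempty {d : ℕ} (hd : 0 < d) : (dyadicScales q d).Nonempty := by
  refine ⟨0, mem_filter.2 ⟨mem_range.2 hd, ?_⟩⟩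
  rw [pow_zero, Real.one_rpow]
  exact_mod_cast hd

end DyadicScales

section MaximalFunction

variable {q : ℝ} {d : ℕ}

lemma latticeBall_eq_energyBall (hq : 1 ≤ q) (d : ℕ) {t : ℝ} (ht : 0 ≤ t) :
    latticeBall q d t = energyBall q ∅ (t ^ q) := by
  ext x
  rw [mem_energyBall hq, latticeBall, mem_filter, mem_Icc]
  refine ⟨fun hx ↦ ⟨by simp, hx.2⟩, fun hx ↦ ⟨?_, hx.2⟩⟩
  have hbound (i : Fin d) : |x i| ≤ (⌈t⌉₊ : ℤ) := by
    have hle : |(x i : ℝ)| ≤ t :=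
      (Real.rpow_le_rpow_iff (abs_nonneg _) ht (zero_lt_one.trans_le hq)).1
        ((abs_rpow_le_energy x i).trans hx.2)
    exact_mod_cast hle.trans (Nat.le_ceil t)
  exact ⟨fun i ↦ (abs_le.1 (hbound i)).1, fun i ↦ (abs_le.1 (hbound i)).2⟩

lemma latticeBall_nonempty (hq : 1 ≤ q) (d : ℕ) {t : ℝ} (ht : 0 ≤ t) :
    (latticeBall q d t).Nonempty :=
  latticeBall_eq_energyBall hq d ht ▸ energyBall_nonempty hq (by positivity)

lemma sum_sq_coeff_uniformKernel_latticeBall_mul_le (hq : 1 ≤ q) {f : ℝ[Fin d → ℤ]}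
    (hf : f ∈ nonnegCone (Fin d → ℤ)) (X : Finset (Fin d → ℤ)) {n : (Fin d → ℤ) → ℕ}
    (hn : ∀ x, n x ∈ dyadicScales q d) :
    ∑ x ∈ X, (uniformKernel (latticeBall q d (2 ^ n x)) * f).coeff x ^ 2
      ≤ 16 * 4090 ^ 2 * dot f f := by
  have hN (m : ℕ) (hm : m ∈ dyadicScales q d) : ((2 : ℝ) ^ m) ^ q ≤ Fintype.card (Fin d) := by
    rw [Fintype.card_fin]
    exact (mem_filter.1 hm).2
  have hball (m : ℕ) : latticeBall q d (2 ^ m) = energyBall q ∅ (((2 : ℝ) ^ m) ^ q) :=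
    latticeBall_eq_energyBall hq d (by positivity)
  simp only [hball]
  exact sum_sq_coeff_uniformKernel_energyBall_mul_le hq (strictMono_floor_mul hq).injective.injOn
    (fun m _ ↦ two_pow_floor_le (zero_le_one.trans hq) m)
    (fun m _ ↦ le_two_mul_two_pow_floor q m) hN hf X hn

lemma exists_sum_sq_expect_latticeBall_le (hq : 1 ≤ q) {g : (Fin d → ℤ) → ℝ} (hg : ∀ x, 0 ≤ g x)
    (X : Finset (Fin d → ℤ)) {n : (Fin d → ℤ) → ℕ} (hn : ∀ x, n x ∈ dyadicScales q d) :
    ∃ S : Finset (Fin d → ℤ), ∑ x ∈ X, (𝔼 y ∈ latticeBall q d (2 ^ n x), g (x - y)) ^ 2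
      ≤ 16 * 4090 ^ 2 * ∑ z ∈ S, g z ^ 2 := by
  set S := X.biUnion fun x ↦ (latticeBall q d (2 ^ n x)).image fun y ↦ x - y
  refine ⟨S, ?_⟩
  set f : ℝ[Fin d → ℤ] := ∑ z ∈ S, .single z (g z) with hf
  have hmem : f ∈ nonnegCone (Fin d → ℤ) :=
    sum_mem fun z _ ↦ single_mem_nonnegCone z (hg z)
  rw [← dot_sum_single_self S]
  refine le_of_eq_of_le (sum_congr rfl fun x hx ↦ ?_)
    (sum_sq_coeff_uniformKernel_latticeBall_mul_le hq hmem X hn)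
  rw [coeff_uniformKernel_mul, expect_eq_sum_div_card, div_eq_inv_mul]
  congr 2
  refine sum_congr rfl fun y hy ↦ ?_
  rw [hf, coeff_sum_single, if_pos (mem_biUnion.2 ⟨x, hx, mem_image_of_mem _ hy⟩)]

lemma tsum_sq_expect_latticeBall_le (hq : 1 ≤ q) {g : (Fin d → ℤ) → ℝ} (hg : ∀ x, 0 ≤ g x)
    {n : (Fin d → ℤ) → ℕ} (hn : ∀ x, n x ∈ dyadicScales q d) :
    ∑' x, ENNReal.ofReal ((𝔼 y ∈ latticeBall q d (2 ^ n x), g (x - y)) ^ 2)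
      ≤ 16 * 4090 ^ 2 * ∑' z, ENNReal.ofReal (g z ^ 2) := by
  rw [ENNReal.tsum_eq_iSup_sum]
  refine iSup_le fun X ↦ ?_
  obtain ⟨S, hS⟩ := exists_sum_sq_expect_latticeBall_le hq hg X hn
  calc ∑ x ∈ X, ENNReal.ofReal ((𝔼 y ∈ latticeBall q d (2 ^ n x), g (x - y)) ^ 2)
      = ENNReal.ofReal (∑ x ∈ X, (𝔼 y ∈ latticeBall q d (2 ^ n x), g (x - y)) ^ 2) :=
        (ENNReal.ofReal_sum_of_nonneg fun _ _ ↦ sq_nonneg _).symm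
    _ ≤ ENNReal.ofReal (16 * 4090 ^ 2 * ∑ z ∈ S, g z ^ 2) := ENNReal.ofReal_le_ofReal hS
    _ = 16 * 4090 ^ 2 * ∑ z ∈ S, ENNReal.ofReal (g z ^ 2) := by
        rw [ENNReal.ofReal_mul (by positivity),
          ENNReal.ofReal_sum_of_nonneg fun _ _ ↦ sq_nonneg _]
        norm_num
    _ ≤ 16 * 4090 ^ 2 * ∑' z, ENNReal.ofReal (g z ^ 2) := by
        gcongr
        exact ENNReal.sum_le_tsum S

lemma expect_rpow_le {α : Type*} {s : Finset α} (hs : s.Nonempty) {z : α → ℝ} (hz : ∀ i, 0 ≤ z i)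
    {r : ℝ} (hr : 1 ≤ r) : (𝔼 i ∈ s, z i) ^ r ≤ 𝔼 i ∈ s, z i ^ r := by
  have hcard : (#s : ℝ) ≠ 0 := Nat.cast_ne_zero.2 hs.card_ne_zero
  have hjensen := Real.rpow_arith_mean_le_arith_mean_rpow s (fun _ ↦ (#s : ℝ)⁻¹) z
    (fun _ _ ↦ by positivity) (by simp [hcard]) (fun i _ ↦ hz i) hr
  simpa only [← mul_sum, expect_eq_sum_div_card, div_eq_inv_mul] using hjensen

lemma norm_avgOp_le (q : ℝ) (d : ℕ) (t : ℝ) (f : (Fin d → ℤ) → ℂ) (x : Fin d → ℤ) :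
    ‖avgOp q d t f x‖ ≤ 𝔼 y ∈ latticeBall q d t, ‖f (x - y)‖ := by
  rw [avgOp, norm_mul, norm_inv, Complex.norm_natCast, expect_eq_sum_div_card, div_eq_inv_mul]
  gcongr
  exact norm_sum_le _ _

lemma norm_avgOp_rpow_le (hq : 1 ≤ q) {t p : ℝ} (ht : 0 ≤ t) (hp : 2 ≤ p)
    (f : (Fin d → ℤ) → ℂ) (x : Fin d → ℤ) :
    ‖avgOp q d t f x‖ ^ p ≤ (𝔼 y ∈ latticeBall q d t, ‖f (x - y)‖ ^ (p / 2)) ^ 2 := by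
  calc ‖avgOp q d t f x‖ ^ p = (‖avgOp q d t f x‖ ^ (p / 2)) ^ 2 := by
        rw [← Real.rpow_mul_natCast (norm_nonneg _), Nat.cast_ofNat, div_mul_cancel₀ p two_ne_zero]
    _ ≤ ((𝔼 y ∈ latticeBall q d t, ‖f (x - y)‖) ^ (p / 2)) ^ 2 := by
        gcongr
        exact norm_avgOp_le q d t f x
    _ ≤ (𝔼 y ∈ latticeBall q d t, ‖f (x - y)‖ ^ (p / 2)) ^ 2 := by
        gcongr
        exact expect_rpow_le (latticeBall_nonempty hq d ht) (fun _ ↦ norm_nonneg _) (by linarith)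

lemma nnnorm_avgOp_le_iSup (hq : 1 ≤ q) {t : ℝ} (ht : 0 ≤ t) (f : (Fin d → ℤ) → ℂ)
    (x : Fin d → ℤ) : (‖avgOp q d t f x‖₊ : ℝ≥0∞) ≤ ⨆ z, (‖f z‖₊ : ℝ≥0∞) := by
  have hne := latticeBall_nonempty hq d ht
  obtain ⟨y, -, hmax⟩ := exists_max_image (latticeBall q d t) (fun y ↦ ‖f (x - y)‖) hne
  have hle : ‖avgOp q d t f x‖₊ ≤ ‖f (x - y)‖₊ :=
    (norm_avgOp_le q d t f x).trans (expect_le hne hmax)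
  exact (ENNReal.coe_le_coe.2 hle).trans (le_iSup (fun z ↦ (‖f z‖₊ : ℝ≥0∞)) (x - y))

/-- The maximal function over the balls of dyadic radius `t ≤ d ^ (1 / q)`. -/
noncomputable def dyadicMaximal (q : ℝ) {d : ℕ} (f : (Fin d → ℤ) → ℂ) (x : Fin d → ℤ) : ℝ≥0∞ :=
  ⨆ (n : ℕ) (_ : (2 : ℝ) ^ n ≤ (d : ℝ) ^ (1 / q)), (‖avgOp q d ((2 : ℝ) ^ n) f x‖₊ : ℝ≥0∞)

lemma exists_dyadicMaximal_le (hq : 1 ≤ q) (hd : 0 < d) (f : (Fin d → ℤ) → ℂ) (x : Fin d → ℤ) :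
    ∃ n ∈ dyadicScales q d, dyadicMaximal q f x ≤ (‖avgOp q d (2 ^ n) f x‖₊ : ℝ≥0∞) := by
  obtain ⟨n, hn, hmax⟩ := exists_max_image (dyadicScales q d) (fun n ↦ ‖avgOp q d (2 ^ n) f x‖₊)
    (dyadicScales_nonempty hd)
  exact ⟨n, hn, iSup₂_le fun m hm ↦ ENNReal.coe_le_coe.2 (hmax m ((mem_dyadicScales hq).2 hm))⟩

lemma tsum_dyadicMaximal_rpow_le (hq : 1 ≤ q) (hd : 0 < d) {p : ℝ} (hp : 2 ≤ p)
    (f : (Fin d → ℤ) → ℂ) :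
    ∑' x, dyadicMaximal q f x ^ p ≤ 16 * 4090 ^ 2 * ∑' x, (‖f x‖₊ : ℝ≥0∞) ^ p := by
  have hp₀ : 0 ≤ p := zero_le_two.trans hp
  have hofReal (u : ℂ) : (‖u‖₊ : ℝ≥0∞) ^ p = ENNReal.ofReal (‖u‖ ^ p) := by
    rw [← ENNReal.ofReal_rpow_of_nonneg (norm_nonneg u) hp₀, ofReal_norm, enorm_eq_nnnorm]
  choose n hn hmax using exists_dyadicMaximal_le hq hd f
  calc ∑' x, dyadicMaximal q f x ^ p
      ≤ ∑' x, ENNReal.ofReal ((𝔼 y ∈ latticeBall q d (2 ^ n x), ‖f (x - y)‖ ^ (p / 2)) ^ 2) := by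
        gcongr with x
        refine (ENNReal.rpow_le_rpow (hmax x) hp₀).trans ?_
        rw [hofReal]
        exact ENNReal.ofReal_le_ofReal (norm_avgOp_rpow_le hq (by positivity) hp f x)
    _ ≤ 16 * 4090 ^ 2 * ∑' z, ENNReal.ofReal ((‖f z‖ ^ (p / 2)) ^ 2) :=
        tsum_sq_expect_latticeBall_le hq (g := fun z ↦ ‖f z‖ ^ (p / 2)) (fun z ↦ by positivity) hn
    _ = 16 * 4090 ^ 2 * ∑' x, (‖f x‖₊ : ℝ≥0∞) ^ p := by
        congr 1
        refine tsum_congr fun z ↦ ?_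
        rw [hofReal, ← Real.rpow_mul_natCast (norm_nonneg _), Nat.cast_ofNat,
          div_mul_cancel₀ p two_ne_zero]

lemma lpNorm_le_mul_of_tsum_rpow_le {p C : ℝ≥0∞} (hp : 1 ≤ p) (hp' : p ≠ ∞) (hC : 1 ≤ C)
    {g h : (Fin d → ℤ) → ℝ≥0∞} (hgh : ∑' x, g x ^ p.toReal ≤ C * ∑' x, h x ^ p.toReal) :
    lpNorm p g ≤ C * lpNorm p h := by
  have hp₁ : 1 ≤ p.toReal := by simpa using ENNReal.toReal_mono hp' hp
  rw [lpNorm, lpNorm, if_neg hp', if_neg hp']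
  calc (∑' x, g x ^ p.toReal) ^ (1 / p.toReal)
      ≤ C ^ (1 / p.toReal) * (∑' x, h x ^ p.toReal) ^ (1 / p.toReal) := by
        rw [← ENNReal.mul_rpow_of_nonneg _ _ (by positivity)]
        gcongr
    _ ≤ C * (∑' x, h x ^ p.toReal) ^ (1 / p.toReal) := by
        gcongr
        exact (ENNReal.rpow_le_rpow_of_exponent_le hC ((div_le_one (by linarith)).2 hp₁)).trans_eq
          (ENNReal.rpow_one C)

lemma lpNorm_top_dyadicMaximal_le (hq : 1 ≤ q) (f : (Fin d → ℤ) → ℂ) :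
    lpNorm ∞ (dyadicMaximal q f) ≤ lpNorm ∞ fun x ↦ (‖f x‖₊ : ℝ≥0∞) := by
  rw [lpNorm, lpNorm, if_pos rfl, if_pos rfl]
  exact iSup_le fun x ↦ iSup₂_le fun n _ ↦ nnnorm_avgOp_le_iSup hq (by positivity) f x

end MaximalFunction

end LatticeBall

theorem stmt0 :
    ∃ C : ℝ≥0, 0 < C ∧ ∀ (q : ℝ), 1 ≤ q → ∀ p : ℝ≥0∞, 2 ≤ p →
      ∀ d : ℕ, 0 < d → ∀ f : (Fin d → ℤ) → ℂ,
      lpNorm p (fun x => ⨆ (n : ℕ) (_ : (2 : ℝ) ^ n ≤ (d : ℝ) ^ (1 / q)),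
          (‖avgOp q d ((2 : ℝ) ^ n) f x‖₊ : ℝ≥0∞))
        ≤ (C : ℝ≥0∞) * lpNorm p (fun x => (‖f x‖₊ : ℝ≥0∞)) := by
  refine ⟨16 * 4090 ^ 2, by norm_num, fun q hq p hp d hd f ↦ ?_⟩
  have hC : (1 : ℝ≥0∞) ≤ (16 * 4090 ^ 2 : ℝ≥0) := by
    norm_num
  change lpNorm p (LatticeBall.dyadicMaximal q f) ≤ _
  rcases eq_or_ne p ∞ with rfl | hp'
  · exact (LatticeBall.lpNorm_top_dyadicMaximal_le hq f).trans (le_mul_of_one_le_left zero_le hC)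
  · have hp₂ : 2 ≤ p.toReal := by simpa using ENNReal.toReal_mono hp' hp
    refine LatticeBall.lpNorm_le_mul_of_tsum_rpow_le (one_le_two.trans hp) hp' hC ?_
    exact_mod_cast LatticeBall.tsum_dyadicMaximal_rpow_le hq hd hp₂ f
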